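/- Let G be a cycle of length n (vertices labeled 1,…,n cyclically) and let I = I_c(G) be its complementary edge ideal. Then for all integers 1 ≤ i < n and all s ≥ ⌊i/2⌋, one has the equality of monomial ideals HS_i(I^s) = Σ_{k = max{ i − ⌈n/2⌉ + 1, 0 }}^{⌊i/2⌋} Σ_{F ⊆ [n], |F| = i−2k} (α^{i−k}/x_F) · I^{s−i+k}, where α = x_1⋯x_n, x_F = ∏_{j∈F} x_j, and by convention I^t = 0 for t < 0 and I^0 = S. -/

import Mathlib

/-!
Write `n = N + 1`, let the edge `j` of the cycle be `{j, j + 1}`, and for a multiset `m` of edges let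
`uexp m` be the exponent of the product of the corresponding generators of `I`.  At a vertex `v` this
exponent is `|m|` minus the degree `m v + m (v - 1)` of `v` in `m`.

The powers of `I` have linear quotients (`linQuot_cycle`).  The products of `s` generators are ordered
colexicographically by their edge multiplicities, larger ones first; a product divisible by an
earlier one is skipped, and the colon ideal at every other `m` is generated by the variables in an
explicit set `colonSet m`.  Hence `Tor_i` of `I ^ s` can be nonzero only in the multidegrees
`uexp m + P` with `P ⊆ colonSet m`, `|P| = i` (`exact_of_linQuot`).  Conversely, each such multidegree
with `m` not skipped carries a nonzero cycle (`exists_cycle_of_linQuot`), which cannot be a boundary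
because all generators have the same degree.  Both facts are proved with chains on subsets of
`Fin n`, to which the strands of the Koszul complex are compared in `nontrivial_Hmod_iff`.

For `⊆`, a subset `P` of `colonSet m` is covered by a matching `M` contained in `m` with `2 |M| < n`
(`exists_split`).  If `F` is the set of the other vertices covered by `M`, then
`uexp m + P = (|M| α - F) + uexp (m - M)`, which is the exponent of an element of the summand with
`k = i - |M|`.

For `⊇`, given `F` and `k`, there are a multiset `M` of `i - k` edges and `P ⊆ colonSet M` such that
the vertex degrees of `M` are `P + F` (`exists_data`).  Then `α ^ (i - k) / x_F` is a multidegree of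
`Tor_i` of `I ^ (i - k)`, and the cycle found there survives multiplication by any product of further
generators (`nontrivial_of_data`).
-/

open MvPolynomial

namespace Paper

noncomputable section

variable (K : Type) [Field K] (n : ℕ)

/-- The polynomial ring `S = K[x_1, …, x_n]`. -/
abbrev S := MvPolynomial (Fin n) K

variable {n}

/-- The squarefree exponent vector of a subset `F ⊆ [n]`. -/
def expF (F : Finset (Fin n)) : Fin n →₀ ℕ := ∑ j ∈ F, Finsupp.single j 1

variable {K}

/-- Basis of the multidegree-`a` component of the `i`-th term of the Koszul
complex of `x_1, …, x_n` tensored with the ideal `I`:  subsets `F` of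
cardinality `i` such that `x^(a - ε_F) ∈ I`. -/
abbrev KB (I : Ideal (S K n)) (a : Fin n →₀ ℕ) (i : ℕ) : Type :=
  {F : Finset (Fin n) // F.card = i ∧ expF F ≤ a ∧
    (monomial (a - expF F) (1 : K) : S K n) ∈ I}

/-- The Koszul differential (in multidegree `a`) from homological degree
`i+1` to `i`. -/
def kd (I : Ideal (S K n)) (a : Fin n →₀ ℕ) (i : ℕ) :
    (KB I a (i + 1) →₀ K) →ₗ[K] (KB I a i →₀ K) :=
  Finsupp.lsum K fun F =>
    LinearMap.toSpanSingleton K _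
      (∑ j ∈ F.1.attach,
        ((-1 : K) ^ ((F.1.filter (fun x => x < j.1)).card)) •
          Finsupp.single
            (⟨F.1.erase j.1, by
              obtain ⟨hcard, hle, hmem⟩ := F.2
              have hj : j.1 ∈ F.1 := j.2
              have herase : expF (F.1.erase j.1) + Finsupp.single j.1 1 = expF F.1 := by
                simpa [expF] using Finset.sum_erase_add F.1 (fun k => Finsupp.single k (1:ℕ)) hj
              refine ⟨by simp [Finset.card_erase_of_mem hj, hcard], ?_, ?_⟩
              · refine le_trans ?_ hle
                rw [← herase]; exact le_add_of_nonneg_right bot_le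
              · have h1 : Finsupp.single j.1 1 ≤ expF F.1 := by
                  rw [← herase]; exact le_add_of_nonneg_left bot_le
                have key : a - expF (F.1.erase j.1) =
                    (a - expF F.1) + Finsupp.single j.1 1 := by
                  have : expF (F.1.erase j.1) = expF F.1 - Finsupp.single j.1 1 := by
                    rw [← herase]; simp
                  rw [this, tsub_tsub_assoc hle h1]
                rw [key]
                have : (monomial ((a - expF F.1) + Finsupp.single j.1 1) (1:K) : S K n)
                    = (monomial (a - expF F.1) (1:K)) * (monomial (Finsupp.single j.1 1) (1:K)) := by
                  rw [monomial_mul, mul_one]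
                rw [this]
                exact Ideal.mul_mem_right _ _ hmem⟩ : KB I a i) (1 : K))

/-- The outgoing Koszul differential from homological degree `i`
(the zero map when `i = 0`). -/
def kdOut (I : Ideal (S K n)) (a : Fin n →₀ ℕ) :
    (i : ℕ) → (KB I a i →₀ K) →ₗ[K] (KB I a (i - 1) →₀ K)
  | 0 => 0
  | (i + 1) => kd I a i

/-- The multidegree-`a` component of `Tor_i^S(K, I)`, computed as the `i`-th
homology of the multidegree-`a` strand of the Koszul complex tensored
with `I`. -/
abbrev Hmod (I : Ideal (S K n)) (a : Fin n →₀ ℕ) (i : ℕ) :=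
  ↥(Submodule.map (Submodule.mkQ (LinearMap.range (kd I a i)))
      (LinearMap.ker (kdOut I a i)))

/-- The `i`-th homological shift ideal `HS_i(I)`, generated by the monomials
`x^a` with `Tor_i^S(K, I)_a ≠ 0`. -/
def HSIdeal (i : ℕ) (I : Ideal (S K n)) : Ideal (S K n) :=
  Ideal.span {p | ∃ a : Fin n →₀ ℕ, Nontrivial (Hmod I a i) ∧ p = monomial a 1}

/-- `I` is a monomial ideal. -/
def IsMonomialIdeal (I : Ideal (S K n)) : Prop :=
  ∃ A : Set (Fin n →₀ ℕ), I = Ideal.span ((fun a => (monomial a 1 : S K n)) '' A)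

/-- `I` has a `d`-linear resolution: `Tor_i^S(K,I)_j = 0` whenever `j ≠ i + d`. -/
def LinearRes (d : ℕ) (I : Ideal (S K n)) : Prop :=
  ∀ (i : ℕ) (a : Fin n →₀ ℕ), (a.sum fun _ e => e) ≠ i + d → Subsingleton (Hmod I a i)

/-- The projective dimension of (a finitely generated multigraded module such
as) `I` over `S`: the largest `i` with `Tor_i^S(K, I) ≠ 0`. -/
def pdim (I : Ideal (S K n)) : ℕ :=
  sSup {i | ∃ a, Nontrivial (Hmod I a i)}

variable (K n)

/-- The graded maximal ideal `𝔪 = (x_1, …, x_n)`. -/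
def maxIdl : Ideal (S K n) := Ideal.span (Set.range X)

/-- The `i`-th squarefree power `𝔪^{[i]} = (x_F : F ⊆ [n], |F| = i)`. -/
def sqPow (i : ℕ) : Ideal (S K n) :=
  Ideal.span {p | ∃ F : Finset (Fin n), F.card = i ∧ p = monomial (expF F) 1}

/-- The exponent vector of `α = x_1⋯x_n`. -/
def aexp : Fin n →₀ ℕ := expF (Finset.univ : Finset (Fin n))

/-- The edge ideal `I(G)` of a graph `G` on `[n]`. -/
def edgeIdeal (G : SimpleGraph (Fin n)) : Ideal (S K n) :=
  Ideal.span {p | ∃ i j, G.Adj i j ∧ p = X i * X j}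

/-- The complementary edge ideal `I_c(G)` of a graph `G` on `[n]`. -/
def compIdeal (G : SimpleGraph (Fin n)) : Ideal (S K n) :=
  Ideal.span {p | ∃ i j, G.Adj i j ∧
    p = monomial (aexp n - Finsupp.single i 1 - Finsupp.single j 1) 1}


variable {K} {n}

/-- `I^t` for `t : ℤ`, with the convention `I^t = 0` for `t < 0`. -/
def zpowI (I : Ideal (S K n)) : ℤ → Ideal (S K n) := fun t =>
  if 0 ≤ t then I ^ t.toNat else 0

end

/-! ### Chains on subsets and the cone operator -/

noncomputable section

section Chains

variable {K : Type} [Field K] {n : ℕ}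

/-- The sign of `v` relative to `G`: minus one to the number of elements of `G` below `v`. -/
def sgn (K : Type) [Field K] {n : ℕ} (v : Fin n) (G : Finset (Fin n)) : K :=
  (-1) ^ (G.filter (fun x => x < v)).card

lemma sgn_mul_self (v : Fin n) (G : Finset (Fin n)) : sgn K v G * sgn K v G = 1 := by
  unfold sgn; rw [← mul_pow]; simp

lemma sgn_insert_lt {v w : Fin n} (G : Finset (Fin n)) (hw : w ∉ G) (h : w < v) :
    sgn K v (insert w G) = - sgn K v G := by
  unfold sgn
  rw [Finset.filter_insert, if_pos h, Finset.card_insert_of_notMem (by simp [hw]), pow_succ]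
  ring

lemma sgn_insert_not_lt {v w : Fin n} (G : Finset (Fin n)) (h : ¬ w < v) :
    sgn K v (insert w G) = sgn K v G := by
  unfold sgn
  rw [Finset.filter_insert, if_neg h]

lemma sgn_swap {v w : Fin n} (G : Finset (Fin n)) (hvw : v ≠ w) (hv : v ∉ G) (hw : w ∉ G) :
    sgn K v (insert w G) * sgn K w G = - (sgn K w (insert v G) * sgn K v G) := by
  rcases lt_or_gt_of_ne hvw with h | h
  · rw [sgn_insert_not_lt G (not_lt.2 h.le), sgn_insert_lt G hv h]; ring
  · rw [sgn_insert_not_lt (v := w) G (not_lt.2 h.le), sgn_insert_lt G hw h]; ring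

/-- The boundary operator of the full simplex on `Fin n` (augmented, so that a vertex has boundary
`∅`), acting on all chains at once; a chain is its coefficient function on subsets. -/
def bd (z : Finset (Fin n) → K) (G : Finset (Fin n)) : K :=
  ∑ v, if v ∈ G then 0 else sgn K v G * z (insert v G)

/-- The cone operator with apex `w`, a contracting homotopy for `bd`. -/
def cone (w : Fin n) (z : Finset (Fin n) → K) (F : Finset (Fin n)) : K :=
  if w ∈ F then sgn K w (F.erase w) * z (F.erase w) else 0

lemma bd_add (y z : Finset (Fin n) → K) : bd (y + z) = bd y + bd z := by
  funext G
  simp only [bd, Pi.add_apply, ← Finset.sum_add_distrib]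
  refine Finset.sum_congr rfl fun v _ => ?_
  split_ifs <;> ring

lemma bd_neg (z : Finset (Fin n) → K) : bd (-z) = - bd z := by
  funext G
  simp only [bd, Pi.neg_apply, ← Finset.sum_neg_distrib]
  refine Finset.sum_congr rfl fun v _ => ?_
  split_ifs <;> ring

lemma bd_sub (y z : Finset (Fin n) → K) : bd (y - z) = bd y - bd z := by
  rw [sub_eq_add_neg, bd_add, bd_neg, sub_eq_add_neg]

lemma bd_smul (c : K) (z : Finset (Fin n) → K) : bd (c • z) = c • bd z := by
  funext G
  simp only [bd, Pi.smul_apply, smul_eq_mul, Finset.mul_sum]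
  refine Finset.sum_congr rfl fun v _ => ?_
  split_ifs <;> ring

lemma exists_of_bd_ne_zero {z : Finset (Fin n) → K} {G : Finset (Fin n)} (h : bd z G ≠ 0) :
    ∃ v, v ∉ G ∧ z (insert v G) ≠ 0 := by
  obtain ⟨v, -, hv⟩ := Finset.exists_ne_zero_of_sum_ne_zero h
  refine ⟨v, fun hm => hv (by simp [hm]), fun h0 => hv (by simp [h0])⟩

lemma bd_bd (z : Finset (Fin n) → K) : bd (bd z) = 0 := by
  funext G
  have h1 : bd (bd z) G = ∑ p : Fin n × Fin n,
      (if p.1 ∈ G ∨ p.2 ∈ G ∨ p.1 = p.2 then 0 else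
        sgn K p.1 G * (sgn K p.2 (insert p.1 G) * z (insert p.2 (insert p.1 G)))) := by
    rw [Fintype.sum_prod_type]
    simp only [bd]
    refine Finset.sum_congr rfl fun v _ => ?_
    by_cases hv : v ∈ G
    · simp [hv]
    · simp only [hv, if_false, false_or, Finset.mul_sum, Finset.mem_insert]
      refine Finset.sum_congr rfl fun w _ => ?_
      by_cases h2 : w ∈ G
      · simp [h2]
      · by_cases h3 : v = w
        · simp [h3]
        · simp [h2, h3, Ne.symm h3]
  rw [h1]
  refine Finset.sum_involution (fun p _ => (p.2, p.1)) ?_ ?_ ?_ ?_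
  · rintro ⟨v, w⟩ -
    by_cases h : v ∈ G ∨ w ∈ G ∨ v = w
    · have h' : w ∈ G ∨ v ∈ G ∨ w = v := by tauto
      simp only [if_pos h, if_pos h', add_zero]
    · have h' : ¬ (w ∈ G ∨ v ∈ G ∨ w = v) := by tauto
      simp only [if_neg h, if_neg h']
      push Not at h
      rw [Finset.insert_comm v w]
      linear_combination (z (insert w (insert v G))) * sgn_swap (K := K) G h.2.2 h.1 h.2.1
  · rintro ⟨v, w⟩ - h0 heq
    have : w = v := by simpa using congrArg Prod.fst heq
    exact h0 (by simp [this])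
  · intro p _; simp
  · intro p _; rfl

lemma bd_cone (w : Fin n) (z : Finset (Fin n) → K) (F : Finset (Fin n)) :
    bd (cone w z) F = z F - cone w (bd z) F := by
  by_cases hw : w ∈ F
  · obtain ⟨G, hG, rfl⟩ : ∃ G, w ∉ G ∧ F = insert w G :=
      ⟨F.erase w, by simp, by simp [Finset.insert_erase hw]⟩
    have h1 : cone w (bd z) (insert w G) = z (insert w G) +
        sgn K w G * ∑ v ∈ Finset.univ.erase w, (if v ∈ G then 0 else sgn K v G * z (insert v G)) := by
      simp only [cone, Finset.mem_insert_self, if_true, Finset.erase_insert hG, bd]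
      rw [← Finset.add_sum_erase _ _ (Finset.mem_univ w), if_neg hG, mul_add, ← mul_assoc,
        sgn_mul_self, one_mul]
    have h2 : bd (cone w z) (insert w G) = ∑ v ∈ Finset.univ.erase w,
        -(sgn K w G * (if v ∈ G then 0 else sgn K v G * z (insert v G))) := by
      rw [bd, ← Finset.add_sum_erase _ _ (Finset.mem_univ w), if_pos (by simp), zero_add]
      refine Finset.sum_congr rfl fun v hv => ?_
      have hvw : v ≠ w := by simpa using hv
      by_cases hvG : v ∈ G
      · simp [hvG]
      · have h3 : v ∉ insert w G := by simp [hvG, hvw]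
        have h4 : (insert v (insert w G)).erase w = insert v G := by
          rw [Finset.insert_comm, Finset.erase_insert (by simp [hG, hvw.symm])]
        rw [if_neg h3, if_neg hvG]
        simp only [cone]
        rw [if_pos (by simp), h4]
        have h5 := sgn_swap (K := K) G hvw hvG hG
        have h6 : sgn K v (insert w G) * sgn K w (insert v G) = - (sgn K w G * sgn K v G) := by
          have e1 := sgn_mul_self (K := K) w G
          have e2 := sgn_mul_self (K := K) w (insert v G)
          linear_combination (sgn K w (insert v G) * sgn K w G) * h5 -
            sgn K v (insert w G) * sgn K w (insert v G) * e1 - sgn K w G * sgn K v G * e2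
        linear_combination (z (insert v G)) * h6
    rw [h1, h2, Finset.sum_neg_distrib, Finset.mul_sum]
    ring
  · have h1 : cone w (bd z) F = 0 := by simp [cone, hw]
    rw [h1, sub_zero, bd, ← Finset.add_sum_erase _ _ (Finset.mem_univ w), if_neg hw,
      Finset.sum_eq_zero, add_zero]
    · simp only [cone, Finset.mem_insert_self, if_true, Finset.erase_insert hw]
      rw [← mul_assoc, sgn_mul_self, one_mul]
    · intro v hv
      have hvw : w ≠ v := by simpa [eq_comm] using hv
      simp [cone, hw, hvw]

end Chains

end

/-! ### Koszul strands of ideals with linear quotients -/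

noncomputable section

section LinearQuotients

variable {K : Type} [Field K] {n : ℕ}

lemma expF_apply (F : Finset (Fin n)) (v : Fin n) : expF F v = if v ∈ F then 1 else 0 := by
  simp [expF, Finsupp.finsetSum_apply, Finsupp.single_apply]

lemma expF_mono {F G : Finset (Fin n)} (h : F ⊆ G) : expF F ≤ expF G := by
  intro v
  rw [expF_apply, expF_apply]
  by_cases hv : v ∈ F
  · simp [hv, h hv]
  · simp [hv]

variable {ι : Type}

/-- `z` is a chain of `i`-element sets in the multidegree-`a` strand of the Koszul complex of the
monomial ideal with exponents `u l`, `l ∈ T`. -/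
def SuppIn (T : Finset ι) (u : ι → Fin n →₀ ℕ) (a : Fin n →₀ ℕ) (i : ℕ)
    (z : Finset (Fin n) → K) : Prop :=
  ∀ F, z F ≠ 0 → F.card = i ∧ ∃ l ∈ T, u l + expF F ≤ a

lemma SuppIn.bd {T : Finset ι} {u : ι → Fin n →₀ ℕ} {a : Fin n →₀ ℕ} {i : ℕ}
    {z : Finset (Fin n) → K} (h : SuppIn T u a (i + 1) z) : SuppIn T u a i (bd z) := by
  intro G hG
  obtain ⟨v, hv, hz⟩ := exists_of_bd_ne_zero hG
  obtain ⟨hc, l, hl, hle⟩ := h _ hz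
  rw [Finset.card_insert_of_notMem hv] at hc
  exact ⟨by omega, l, hl, (add_le_add_right (expF_mono (Finset.subset_insert v G)) _).trans hle⟩

variable [LinearOrder ι]

/-- `j` is redundant if its monomial is divisible by one with a larger index. -/
def Redundant (T : Finset ι) (u : ι → Fin n →₀ ℕ) (j : ι) : Prop :=
  ∃ l ∈ T, j < l ∧ u l ≤ u j

/-- The family `u` on `T`, read in decreasing order, has linear quotients after dropping redundant
members: the colon ideal at `j` is generated by the variables indexed by `D j`. -/
def LinQuot (T : Finset ι) (u : ι → Fin n →₀ ℕ) (D : ι → Finset (Fin n)) : Prop :=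
  ∀ j ∈ T, ¬ Redundant T u j →
    (∀ v ∈ D j, ∃ l ∈ T, j < l ∧ u l ≤ u j + Finsupp.single v 1) ∧
    ∀ l ∈ T, j < l → ∃ v ∈ D j, u j v < u l v

/-- Without linear-quotient data `a = u j + P`, `P ⊆ D j`, in homological degree `i`, the strand in
multidegree `a` is exact in degree `i`.  The faces that `j` adds to those of the larger indices form
a set stable under toggling some vertex `w`, so that a cone with apex `w` pushes any cycle off it. -/
theorem exact_of_linQuot {T : Finset ι} {u : ι → Fin n →₀ ℕ} {D : ι → Finset (Fin n)}
    (hLQ : LinQuot T u D) (a : Fin n →₀ ℕ) (i : ℕ)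
    (hno : ∀ j ∈ T, ¬ Redundant T u j → ∀ P ⊆ D j, P.card = i → u j + expF P ≠ a) :
    ∀ T' : Finset ι, T' ⊆ T → (∀ j ∈ T', ∀ l ∈ T, j < l → l ∈ T') →
      ∀ z : Finset (Fin n) → K, SuppIn T' u a i z → bd z = 0 →
        ∃ y : Finset (Fin n) → K, SuppIn T' u a (i + 1) y ∧ bd y = z := by
  intro T'
  induction T' using Finset.induction_on_min with
  | empty =>
    intro _ _ z hz _
    refine ⟨0, fun F hF => absurd rfl hF, ?_⟩
    funext F
    by_contra hF
    obtain ⟨-, l, hl, -⟩ := hz F (fun h => hF (by rw [h]; simp [bd]))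
    simp at hl
  | insert j T' hj ih =>
    intro hsub hup z hz hcyc
    have hjT : j ∈ T := hsub (Finset.mem_insert_self _ _)
    have hsub' : T' ⊆ T := (Finset.subset_insert _ _).trans hsub
    have hup' : ∀ k ∈ T', ∀ l ∈ T, k < l → l ∈ T' := by
      intro k hk l hl hkl
      have h1 := hup k (Finset.mem_insert_of_mem hk) l hl hkl
      rcases Finset.mem_insert.1 h1 with h | h
      · exact absurd (hj k hk) (not_lt.2 (h ▸ hkl.le))
      · exact h
    have hlater : ∀ l ∈ T, j < l → l ∈ T' := by
      intro l hl hjl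
      rcases Finset.mem_insert.1 (hup j (Finset.mem_insert_self _ _) l hl hjl) with h | h
      · exact absurd hjl (h ▸ lt_irrefl _)
      · exact h
    -- If `z` lives on the smaller index set, the induction hypothesis applies directly.
    have easy : ∀ z : Finset (Fin n) → K, SuppIn T' u a i z → bd z = 0 →
        ∃ y : Finset (Fin n) → K, SuppIn (insert j T') u a (i + 1) y ∧ bd y = z := by
      intro z hz hcyc
      obtain ⟨y, hy, hyz⟩ := ih hsub' hup' z hz hcyc
      refine ⟨y, fun F hF => ?_, hyz⟩
      obtain ⟨h1, l, hl, h2⟩ := hy F hF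
      exact ⟨h1, l, Finset.mem_insert_of_mem hl, h2⟩
    by_cases hz' : SuppIn T' u a i z
    · exact easy z hz' hcyc
    by_cases hred : Redundant T u j
    · exfalso
      apply hz'
      intro F hF
      obtain ⟨h1, l, hl, h2⟩ := hz F hF
      refine ⟨h1, ?_⟩
      rcases Finset.mem_insert.1 hl with rfl | hl
      · obtain ⟨l', hl', hlt, hle⟩ := hred
        exact ⟨l', hlater l' hl' hlt, (add_le_add_left hle _).trans h2⟩
      · exact ⟨l, hl, h2⟩
    obtain ⟨hD1, hD2⟩ := hLQ j hjT hred
    -- `N F`: the face `F` is new, that is, it comes from `j` but from no larger index.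
    set N : Finset (Fin n) → Prop := fun F =>
      u j + expF F ≤ a ∧ ∀ v ∈ D j, u j v + expF F v = a v with hN
    have hNnew : ∀ F, u j + expF F ≤ a → (¬ ∃ l ∈ T', u l + expF F ≤ a) → N F := by
      intro F hF hnot
      refine ⟨hF, fun v hv => ?_⟩
      by_contra hne
      obtain ⟨l, hl, hlt, hle⟩ := hD1 v hv
      refine hnot ⟨l, hlater l hl hlt, fun x => ?_⟩
      have h1 := hF x
      have h2 := hle x
      simp only [Finsupp.add_apply, Finsupp.single_apply] at h1 h2 ⊢
      split_ifs at h2 with hx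
      · subst hx; omega
      · omega
    have hNold : ∀ F, N F → ¬ ∃ l ∈ T', u l + expF F ≤ a := by
      rintro F ⟨-, hF⟩ ⟨l, hl, hle⟩
      obtain ⟨v, hv, hlt⟩ := hD2 l (hsub' hl) (hj l hl)
      have h1 := hle v
      have h2 := hF v hv
      simp only [Finsupp.add_apply] at h1
      omega
    have hex : ∃ F, z F ≠ 0 ∧ N F := by
      by_contra hcon
      push Not at hcon
      apply hz'
      intro F hF
      obtain ⟨h1, l, hl, h2⟩ := hz F hF
      refine ⟨h1, ?_⟩
      by_contra hnot
      rcases Finset.mem_insert.1 hl with rfl | hl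
      · exact hcon F hF (hNnew F h2 hnot)
      · exact hnot ⟨l, hl, h2⟩
    obtain ⟨F₀, hzF₀, hNF₀⟩ := hex
    obtain ⟨w, hwD, hwa⟩ : ∃ w, w ∉ D j ∧ u j w < a w := by
      by_contra hcon
      push Not at hcon
      refine hno j hjT hred F₀ ?_ (hz F₀ hzF₀).1 ?_
      · intro x hx
        by_contra hxD
        have h1 := hcon x hxD
        have h2 := hNF₀.1 x
        simp only [Finsupp.add_apply, expF_apply, hx, if_true] at h2
        omega
      · ext x
        by_cases hxD : x ∈ D j
        · exact hNF₀.2 x hxD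
        · have h1 := hcon x hxD
          have h2 := hNF₀.1 x
          simp only [Finsupp.add_apply] at h2 ⊢
          omega
    have hNerase : ∀ F, N F → N (F.erase w) := by
      rintro F ⟨h1, h2⟩
      refine ⟨(add_le_add_right (expF_mono (Finset.erase_subset w F)) _).trans h1, fun v hv => ?_⟩
      have hvw : v ≠ w := fun h => hwD (h ▸ hv)
      rw [← h2 v hv, expF_apply, expF_apply]
      simp [hvw]
    have hNofErase : ∀ F, N (F.erase w) → N F := by
      rintro F ⟨h1, h2⟩
      refine ⟨fun x => ?_, fun v hv => ?_⟩
      · have h3 := h1 x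
        simp only [Finsupp.add_apply, expF_apply, Finset.mem_erase] at h3 ⊢
        by_cases hx : x = w
        · subst hx; split_ifs <;> omega
        · simpa [hx] using h3
      · have hvw : v ≠ w := fun h => hwD (h ▸ hv)
        rw [← h2 v hv, expF_apply, expF_apply]
        simp [hvw]
    classical
    set zN : Finset (Fin n) → K := fun F => if N F then z F else 0 with hzN
    have hyN : ∀ F, cone w zN F ≠ 0 → N F ∧ F.card = i + 1 := by
      intro F hF
      simp only [cone] at hF
      split_ifs at hF with hwF
      · have h1 := right_ne_zero_of_mul hF
        simp only [hzN] at h1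
        split_ifs at h1 with h2
        · refine ⟨hNofErase F h2, ?_⟩
          have h3 := (hz _ h1).1
          rw [Finset.card_erase_of_mem hwF] at h3
          have := Finset.card_pos.2 ⟨w, hwF⟩
          omega
        · exact absurd rfl h1
      · exact absurd rfl hF
    have hySupp : SuppIn (insert j T') u a (i + 1) (cone w zN) := fun F hF =>
      ⟨(hyN F hF).2, j, Finset.mem_insert_self _ _, (hyN F hF).1.1⟩
    have hbdN : ∀ F, N F → bd zN F = 0 := by
      intro F hF
      have h0 : bd z F = 0 := by rw [hcyc]; rfl
      rw [← h0]
      refine Finset.sum_congr rfl fun v _ => ?_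
      split_ifs with hv
      · rfl
      · congr 1
        simp only [hzN]
        split_ifs with hNv
        · rfl
        · by_contra hne
          obtain ⟨-, l, hl, hle⟩ := hz _ (Ne.symm hne)
          by_cases hold : ∃ l ∈ T', u l + expF (insert v F) ≤ a
          · obtain ⟨l', hl', hle'⟩ := hold
            exact hNold F hF ⟨l', hl',
              (add_le_add_right (expF_mono (Finset.subset_insert v F)) _).trans hle'⟩
          · rcases Finset.mem_insert.1 hl with rfl | hl
            · exact hNv (hNnew _ hle hold)
            · exact hold ⟨l, hl, hle⟩
    have hbdy : ∀ F, N F → bd (cone w zN) F = z F := by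
      intro F hF
      rw [bd_cone]
      have h1 : cone w (bd zN) F = 0 := by
        simp only [cone]
        split_ifs
        · rw [hbdN _ (hNerase F hF), mul_zero]
        · rfl
      rw [h1, sub_zero]
      simp [hzN, hF]
    have hz2 : SuppIn T' u a i (z - bd (cone w zN)) := by
      intro F hF
      have hnN : ¬ N F := fun h => hF (by simp [hbdy F h])
      have hS : F.card = i ∧ ∃ l ∈ insert j T', u l + expF F ≤ a := by
        by_cases hzF : z F = 0
        · refine hySupp.bd F fun h => hF (by simp [hzF, h])
        · exact hz F hzF
      obtain ⟨h1, l, hl, h2⟩ := hS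
      refine ⟨h1, ?_⟩
      by_contra hnot
      rcases Finset.mem_insert.1 hl with rfl | hl
      · exact hnN (hNnew F h2 hnot)
      · exact hnot ⟨l, hl, h2⟩
    obtain ⟨y, hy, hyz⟩ := easy _ hz2 (by rw [bd_sub, hcyc, bd_bd, sub_zero])
    refine ⟨y + cone w zN, fun F hF => ?_, ?_⟩
    · by_cases hyF : y F = 0
      · exact hySupp F (fun h => hF (by simp [hyF, h]))
      · exact hy F hyF
    · rw [bd_add, hyz]; simp

/-- Total degree of an exponent vector. -/
def deg (a : Fin n →₀ ℕ) : ℕ := ∑ v, a v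

lemma deg_add (a b : Fin n →₀ ℕ) : deg (a + b) = deg a + deg b := by
  simp [deg, Finset.sum_add_distrib]

lemma deg_expF (F : Finset (Fin n)) : deg (expF F) = F.card := by
  simp [deg, expF_apply]

/-- Linear-quotient data `P ⊆ D j` yields a nonzero cycle of `P.card`-element sets in multidegree
`u j + P`: the boundary of `P` lives on the larger indices, where it bounds for degree reasons. -/
theorem exists_cycle_of_linQuot {T : Finset ι} {u : ι → Fin n →₀ ℕ} {D : ι → Finset (Fin n)}
    (hLQ : LinQuot T u D) (δ : ℕ) (hδ : ∀ l ∈ T, deg (u l) = δ)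
    {j : ι} (hj : j ∈ T) (hred : ¬ Redundant T u j) {P : Finset (Fin n)} (hP : P ⊆ D j)
    {i : ℕ} (hi : P.card = i + 1) :
    ∃ z : Finset (Fin n) → K, SuppIn T u (u j + expF P) (i + 1) z ∧ bd z = 0 ∧ z ≠ 0 := by
  classical
  set a := u j + expF P with ha
  set T' := T.filter (fun l => j < l) with hT'
  have hsing : bd (bd (Pi.single P (1 : K))) = 0 := bd_bd _
  have hsupp : SuppIn T' u a i (bd (Pi.single P (1 : K))) := by
    intro G hG
    obtain ⟨v, hv, hz⟩ := exists_of_bd_ne_zero hG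
    have hPG : insert v G = P := by
      by_contra hne
      exact hz (by simp [hne])
    subst hPG
    rw [Finset.card_insert_of_notMem hv] at hi
    obtain ⟨l, hl, hlt, hle⟩ := (hLQ j hj hred).1 v (hP (Finset.mem_insert_self _ _))
    refine ⟨by omega, l, by simp [hT', hl, hlt], fun x => ?_⟩
    have h1 := hle x
    simp only [ha, Finsupp.add_apply, Finsupp.single_apply, expF_apply, Finset.mem_insert] at h1 ⊢
    by_cases hx : v = x
    · subst hx; simp [hv] at h1 ⊢; omega
    · simp [hx, Ne.symm hx] at h1 ⊢; omega
  obtain ⟨y, hy, hyz⟩ := exact_of_linQuot hLQ a i (by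
      intro l hl _ Q _ hQ heq
      have h1 := congrArg deg heq
      rw [ha, deg_add, deg_add, deg_expF, deg_expF, hδ l hl, hδ j hj] at h1
      omega) T' (Finset.filter_subset _ _) (by
      intro k hk l hl hkl
      simp only [hT', Finset.mem_filter] at hk ⊢
      exact ⟨hl, hk.2.trans hkl⟩) _ hsupp hsing
  have hyP : y P = 0 := by
    by_contra hne
    obtain ⟨-, l, hl, hle⟩ := hy P hne
    simp only [hT', Finset.mem_filter] at hl
    exact hred ⟨l, hl.1, hl.2, le_of_add_le_add_right hle⟩
  refine ⟨Pi.single P 1 - y, fun F hF => ?_, by rw [bd_sub, hyz, sub_self], fun h => ?_⟩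
  · by_cases hFP : F = P
    · subst hFP
      exact ⟨hi, j, hj, le_rfl⟩
    · have : y F ≠ 0 := fun h => hF (by simp [hFP, h])
      obtain ⟨h1, l, hl, h2⟩ := hy F this
      exact ⟨h1, l, (Finset.mem_filter.1 hl).1, h2⟩
  · have := congrFun h P
    simp [hyP] at this

end LinearQuotients

end

/-! ### Comparison with the Koszul homology of an ideal -/

noncomputable section

section Translation

variable {K : Type} [Field K] {n : ℕ}

/-- Extension by zero of a Koszul chain to a function on all subsets. -/
def ext (I : Ideal (S K n)) (a : Fin n →₀ ℕ) (i : ℕ) (Z : KB I a i →₀ K)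
    (F : Finset (Fin n)) : K :=
  open Classical in
  if h : F.card = i ∧ expF F ≤ a ∧ (monomial (a - expF F) (1 : K) : S K n) ∈ I
  then Z ⟨F, h⟩ else 0

lemma ext_add (I : Ideal (S K n)) (a : Fin n →₀ ℕ) (i : ℕ) (Y Z : KB I a i →₀ K) :
    ext I a i (Y + Z) = ext I a i Y + ext I a i Z := by
  funext F
  simp only [ext, Pi.add_apply]
  split_ifs <;> simp

lemma ext_smul (I : Ideal (S K n)) (a : Fin n →₀ ℕ) (i : ℕ) (c : K) (Z : KB I a i →₀ K) :
    ext I a i (c • Z) = c • ext I a i Z := by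
  funext F
  simp only [ext, Pi.smul_apply]
  split_ifs <;> simp

/-- `ext` as a linear map. -/
def extL (I : Ideal (S K n)) (a : Fin n →₀ ℕ) (i : ℕ) :
    (KB I a i →₀ K) →ₗ[K] (Finset (Fin n) → K) where
  toFun := ext I a i
  map_add' := ext_add I a i
  map_smul' := ext_smul I a i

/-- `bd` as a linear map. -/
def bdL : (Finset (Fin n) → K) →ₗ[K] (Finset (Fin n) → K) where
  toFun := bd
  map_add' := bd_add
  map_smul' := bd_smul

lemma extL_single (I : Ideal (S K n)) (a : Fin n →₀ ℕ) (i : ℕ) (F : KB I a i) (c : K) :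
    extL I a i (Finsupp.single F c) = Pi.single F.1 c := by
  classical
  funext G
  change ext I a i _ G = _
  simp only [ext]
  by_cases hG : G = F.1
  · subst hG
    rw [dif_pos F.2]; simp
  · rw [Pi.single_eq_of_ne hG]
    split_ifs with h
    · rw [Finsupp.single_eq_of_ne]
      intro h2; exact hG (by rw [← h2])
    · rfl

lemma ext_kd (I : Ideal (S K n)) (a : Fin n →₀ ℕ) (i : ℕ) (Z : KB I a (i + 1) →₀ K) :
    ext I a i (kd I a i Z) = bd (ext I a (i + 1) Z) := by
  classical
  have key : (extL I a i).comp (kd I a i) = bdL.comp (extL I a (i + 1)) := by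
    refine Finsupp.lhom_ext' fun F => LinearMap.ext_ring ?_
    simp only [LinearMap.comp_apply, Finsupp.lsingle_apply]
    rw [extL_single]
    simp only [kd, Finsupp.lsum_single, LinearMap.toSpanSingleton_apply, one_smul, map_sum,
      map_smul, extL_single]
    funext G
    change _ = bd _ G
    rw [Finset.sum_apply]
    simp only [Pi.smul_apply, smul_eq_mul, Pi.single_apply]
    rw [Finset.sum_attach F.1 (fun j => (-1 : K) ^ (F.1.filter (fun x => x < j)).card *
      (if G = F.1.erase j then 1 else 0)), bd]
    rw [← Finset.sum_filter_add_sum_filter_not Finset.univ (fun v => v ∈ F.1)]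
    rw [Finset.filter_mem_eq_inter, Finset.univ_inter]
    rw [Finset.sum_eq_zero (s := Finset.univ.filter (fun v => v ∉ F.1)), add_zero]
    · refine Finset.sum_congr rfl fun v hv => ?_
      by_cases hG : G = F.1.erase v
      · subst hG
        have h1 : (F.1.erase v).filter (fun x => x < v) = F.1.filter (fun x => x < v) := by
          ext x; simp only [Finset.mem_filter, Finset.mem_erase]
          constructor
          · rintro ⟨⟨_, h⟩, h'⟩; exact ⟨h, h'⟩
          · rintro ⟨h, h'⟩; exact ⟨⟨h'.ne, h⟩, h'⟩
        simp [sgn, h1, Finset.insert_erase hv]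
      · rw [if_neg hG, mul_zero]
        split_ifs with h1
        · rfl
        · rw [Pi.single_eq_of_ne, mul_zero]
          intro h2
          exact hG (by rw [← h2, Finset.erase_insert h1])
    · intro v hv
      have hv' : v ∉ F.1 := by simpa using hv
      split_ifs with h1
      · rfl
      · rw [Pi.single_eq_of_ne, mul_zero]
        intro h2
        exact hv' (h2 ▸ Finset.mem_insert_self v G)
  exact LinearMap.congr_fun key Z

lemma ext_injective (I : Ideal (S K n)) (a : Fin n →₀ ℕ) (i : ℕ) :
    Function.Injective (ext I a i) := by
  intro Y Z h
  ext F
  have := congrFun h F.1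
  simp only [ext] at this
  rwa [dif_pos F.2, dif_pos F.2] at this

lemma ext_ne_zero {I : Ideal (S K n)} {a : Fin n →₀ ℕ} {i : ℕ} {Z : KB I a i →₀ K}
    {F : Finset (Fin n)} (h : ext I a i Z F ≠ 0) :
    F.card = i ∧ expF F ≤ a ∧ (monomial (a - expF F) (1 : K) : S K n) ∈ I := by
  by_contra hn
  exact h (by simp only [ext]; rw [dif_neg hn])

lemma exists_ext (I : Ideal (S K n)) (a : Fin n →₀ ℕ) (i : ℕ) (z : Finset (Fin n) → K)
    (hz : ∀ F, z F ≠ 0 →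
      F.card = i ∧ expF F ≤ a ∧ (monomial (a - expF F) (1 : K) : S K n) ∈ I) :
    ∃ Z, ext I a i Z = z := by
  classical
  have : Finite (KB I a i) := Subtype.finite
  refine ⟨Finsupp.equivFunOnFinite.symm (fun F => z F.1), ?_⟩
  funext F
  simp only [ext]
  split_ifs with h
  · simp
  · by_contra hne
    exact h (hz F (Ne.symm hne))

lemma nontrivial_Hmod_iff (I : Ideal (S K n)) (a : Fin n →₀ ℕ) (i : ℕ) :
    Nontrivial (Hmod I a (i + 1)) ↔
      ∃ z : Finset (Fin n) → K,
        (∀ F, z F ≠ 0 → F.card = i + 1 ∧ expF F ≤ a ∧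
          (monomial (a - expF F) (1 : K) : S K n) ∈ I) ∧ bd z = 0 ∧
        ∀ y : Finset (Fin n) → K,
          (∀ F, y F ≠ 0 → F.card = i + 2 ∧ expF F ≤ a ∧
            (monomial (a - expF F) (1 : K) : S K n) ∈ I) → bd y ≠ z := by
  rw [Submodule.nontrivial_iff_ne_bot, Ne, ← LinearMap.le_ker_iff_map, Submodule.ker_mkQ,
    SetLike.not_le_iff_exists]
  have hz0 : ∀ i, ext I a i 0 = 0 := fun i => (extL I a i).map_zero
  constructor
  · rintro ⟨Z, hZ, hZr⟩
    have hZ' : kd I a i Z = 0 := hZ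
    refine ⟨ext I a (i + 1) Z, fun F hF => ext_ne_zero hF, ?_, ?_⟩
    · rw [← ext_kd, hZ', hz0]
    · intro y hy hyz
      obtain ⟨Y, rfl⟩ := exists_ext I a (i + 2) y hy
      rw [← ext_kd] at hyz
      exact hZr ⟨Y, ext_injective _ _ _ hyz⟩
  · rintro ⟨z, hz, hcyc, hnb⟩
    obtain ⟨Z, rfl⟩ := exists_ext I a (i + 1) z hz
    refine ⟨Z, ?_, ?_⟩
    · change kd I a i Z = 0
      apply ext_injective
      rw [ext_kd, hcyc, hz0]
    · rintro ⟨Y, hY⟩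
      refine hnb (ext I a (i + 2) Y) (fun F hF => ext_ne_zero hF) ?_
      rw [← ext_kd, hY]

end Translation

end

/-! ### Edge multiplicities along a path -/

noncomputable section

section Sequences

/-- The inequality behind linear quotients.  Let `d` be the increments of the edge multiplicities
from `m` to a colexicographically larger multiset of the same size.  Then the vertex sums
`d x + d (x - 1)` cannot be nonnegative at every vertex of the colon set of `m`: otherwise the partial
sums of `d` before its last nonzero value, which is positive, would be nonnegative, and the total sum
would be positive. -/
lemma no_nonneg_increment (N : ℕ) (m : ℕ → ℕ) (d : ℕ → ℤ) (j₀ : ℕ) (hj₀ : j₀ ≤ N)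
    (hsum : ∑ x ∈ Finset.range (N + 1), d x = 0)
    (hneg : ∀ x ≤ N, d x < 0 → 0 < m x)
    (hpos : 0 < d j₀) (htop : ∀ x, j₀ < x → x ≤ N → d x = 0)
    (hD0 : 0 < N → 0 < m 0 → 0 ≤ d 0 + d N)
    (hD : ∀ x, x + 1 < N → (0 < m (x + 1) ∨ (Odd (x + 1) ∧ ∀ y < x + 1, Even y → 0 < m y)) →
      0 ≤ d (x + 1) + d x)
    (hirr : ¬ (Odd N ∧ ∀ y < N, Even y → 0 < m y)) : False := by
  -- Once the partial sum dominates `max 0 (d v)`, it keeps doing so.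
  have step : ∀ v, v + 1 ≤ N → (v + 1 < N ∨ 0 ≤ d (v + 1)) →
      (0 ≤ ∑ x ∈ Finset.range (v + 1), d x ∧ d v ≤ ∑ x ∈ Finset.range (v + 1), d x) →
      (0 ≤ ∑ x ∈ Finset.range (v + 2), d x ∧ d (v + 1) ≤ ∑ x ∈ Finset.range (v + 2), d x) := by
    intro v hv hor h
    rw [Finset.sum_range_succ (n := v + 1)]
    by_cases hd : 0 ≤ d (v + 1)
    · constructor <;> linarith [h.1, h.2]
    · have h1 := hD v (by omega) (Or.inl (hneg _ hv (by omega)))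
      constructor <;> linarith [h.1, h.2]
  rcases Nat.lt_or_ge j₀ N with hlt | hge
  · have hdN : d N = 0 := htop N hlt le_rfl
    have h0 : 0 ≤ d 0 := by
      by_contra h
      have := hD0 (by omega) (hneg 0 (by omega) (by omega))
      omega
    have hall : ∀ v ≤ j₀, 0 ≤ ∑ x ∈ Finset.range (v + 1), d x ∧
        d v ≤ ∑ x ∈ Finset.range (v + 1), d x := by
      intro v
      induction v with
      | zero => intro _; simpa using h0
      | succ v ih => intro hv; exact step v (by omega) (Or.inl (by omega)) (ih (by omega))
    have h1 := (hall j₀ le_rfl).2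
    have h2 : ∑ x ∈ Finset.range (N + 1), d x = ∑ x ∈ Finset.range (j₀ + 1), d x := by
      symm
      refine Finset.sum_subset (by intro x; simp; omega) ?_
      intro x hx hx'
      simp only [Finset.mem_range] at hx hx'
      exact htop x (by omega) (by omega)
    omega
  · obtain rfl : j₀ = N := le_antisymm hj₀ hge
    rcases Nat.eq_zero_or_pos j₀ with rfl | hNpos
    · simp at hsum; omega
    -- Either the partial sum is under control, or every even edge so far is present.
    have hall : ∀ v < j₀, (0 ≤ ∑ x ∈ Finset.range (v + 1), d x ∧
        d v ≤ ∑ x ∈ Finset.range (v + 1), d x) ∨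
        ((∀ y ≤ v, Even y → 0 < m y) ∧ (Odd v → 0 ≤ ∑ x ∈ Finset.range (v + 1), d x) ∧
          (Even v → 0 ≤ ∑ x ∈ Finset.range v, d x)) := by
      intro v
      induction v with
      | zero =>
        intro _
        by_cases hm : 0 < m 0
        · right
          refine ⟨fun y hy _ => by rwa [Nat.le_zero.1 hy], by simp, by simp⟩
        · left
          have : 0 ≤ d 0 := by
            by_contra h
            exact hm (hneg 0 (by omega) (by omega))
          simpa using this
      | succ v ih =>
        intro hv
        rcases ih (by omega) with h | ⟨h1, h2, h3⟩
        · left; exact step v (by omega) (Or.inl hv) h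
        · rcases Nat.even_or_odd v with he | ho
          · right
            have hodd : Odd (v + 1) := he.add_one
            refine ⟨?_, ?_, ?_⟩
            · intro y hy hye
              rcases Nat.lt_or_ge v y with h | h
              · have : y = v + 1 := by omega
                subst this
                exact absurd hye (by simpa using hodd)
              · exact h1 y h hye
            · intro _
              have h4 := hD v hv (Or.inr ⟨hodd, fun y hy hye => h1 y (by omega) hye⟩)
              have h5 := h3 he
              rw [Finset.sum_range_succ, Finset.sum_range_succ]
              omega
            · intro h; exact absurd h (by simpa using hodd)
          · have heven : Even (v + 1) := ho.add_one
            have hS := h2 ho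
            by_cases hm : 0 < m (v + 1)
            · right
              refine ⟨?_, fun h => absurd h (by simpa using heven), fun _ => hS⟩
              intro y hy hye
              rcases Nat.lt_or_ge v y with h | h
              · have : y = v + 1 := by omega
                subst this; exact hm
              · exact h1 y h hye
            · left
              have h0 : 0 ≤ d (v + 1) := by
                by_contra h
                exact hm (hneg _ (by omega) (by omega))
              rw [Finset.sum_range_succ (n := v + 1)]
              constructor <;> omega
    obtain ⟨v, rfl⟩ : ∃ v, j₀ = v + 1 := ⟨j₀ - 1, by omega⟩
    rw [Finset.sum_range_succ] at hsum
    rcases hall v (by omega) with h | ⟨h1, h2, h3⟩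
    · omega
    · rcases Nat.even_or_odd v with he | ho
      · exact hirr ⟨he.add_one, fun y hy hye => h1 y (by omega) hye⟩
      · have := h2 ho
        omega

/-- The part below `v` of a subset `P` of the colon set is covered by a matching `A` of present edges,
each of them meeting `P`.  Here `x ∈ A` stands for the edge `{x, x + 1}`. -/
lemma exists_matching (N : ℕ) (m : ℕ → ℕ) (P : Finset ℕ)
    (hP : ∀ x ∈ P, x < N ∧ (0 < m x ∨ (Odd x ∧ ∀ y < x, Even y → 0 < m y))) (v : ℕ) :
    ∃ A : Finset ℕ, (∀ x ∈ A, x < v ∧ 0 < m x ∧ x + 1 ∉ A ∧ (x ∈ P ∨ x + 1 ∈ P)) ∧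
      ∀ x ∈ P, x < v → x ∈ A ∨ (0 < x ∧ x - 1 ∈ A) := by
  induction v with
  | zero => exact ⟨∅, by simp, by simp⟩
  | succ v ih =>
    obtain ⟨A, hA, hcov⟩ := ih
    have keep : (v ∈ P → v ∈ A ∨ (0 < v ∧ v - 1 ∈ A)) →
        ∃ A : Finset ℕ, (∀ x ∈ A, x < v + 1 ∧ 0 < m x ∧ x + 1 ∉ A ∧ (x ∈ P ∨ x + 1 ∈ P)) ∧
      ∀ x ∈ P, x < v + 1 → x ∈ A ∨ (0 < x ∧ x - 1 ∈ A) := by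
      intro h
      refine ⟨A, fun x hx => ⟨by have := (hA x hx).1; omega, (hA x hx).2⟩, fun x hx hxv => ?_⟩
      rcases Nat.lt_or_ge x v with h' | h'
      · exact hcov x hx h'
      · obtain rfl : x = v := by omega
        exact h hx
    by_cases hvP : v ∈ P
    swap
    · exact keep fun h => absurd h hvP
    by_cases hpre : 0 < v ∧ v - 1 ∈ A
    · exact keep fun _ => Or.inr hpre
    rcases (hP v hvP).2 with hm | ⟨hodd, hev⟩
    · refine ⟨insert v A, fun x hx => ?_, fun x hx hxv => ?_⟩
      · rcases Finset.mem_insert.1 hx with rfl | hx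
        · refine ⟨by omega, hm, ?_, Or.inl hvP⟩
          intro h
          rcases Finset.mem_insert.1 h with h | h
          · omega
          · have := (hA _ h).1; omega
        · obtain ⟨h1, h2, h3, h4⟩ := hA x hx
          refine ⟨by omega, h2, ?_, h4⟩
          intro h
          rcases Finset.mem_insert.1 h with h | h
          · exact hpre ⟨by omega, by rw [← h]; simpa using hx⟩
          · exact h3 h
      · rcases Nat.lt_or_ge x v with h' | h'
        · rcases hcov x hx h' with h | h
          · exact Or.inl (Finset.mem_insert_of_mem h)
          · exact Or.inr ⟨h.1, Finset.mem_insert_of_mem h.2⟩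
        · obtain rfl : x = v := by omega
          exact Or.inl (Finset.mem_insert_self _ _)
    -- No edge `v` is available: rematch everything up to `v` by the even edges.
    · refine ⟨(Finset.range (v + 1)).filter fun x => Even x ∧ (x ∈ P ∨ x + 1 ∈ P),
        fun x hx => ?_, fun x hx hxv => ?_⟩
      · simp only [Finset.mem_filter, Finset.mem_range] at hx ⊢
        obtain ⟨h1, h2, h3⟩ := hx
        have hne : x ≠ v := fun h => by
          subst h; exact absurd hodd (by simpa using h2)
        refine ⟨h1, hev x (by omega) h2, fun h => ?_, h3⟩
        exact absurd h.2.1 (by simpa using h2.add_one)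
      · simp only [Finset.mem_filter, Finset.mem_range]
        rcases Nat.even_or_odd x with he | ho
        · exact Or.inl ⟨hxv, he, Or.inl hx⟩
        · right
          have hx0 : 0 < x := ho.pos
          refine ⟨hx0, by omega, ?_, Or.inr (by rwa [Nat.sub_add_cancel hx0])⟩
          obtain ⟨q, hq⟩ := ho
          exact ⟨q, by omega⟩

/-- A matching of the path with edges `0, …, N - 1` other than the perfect one consisting of the
even edges covers fewer than `N + 1` vertices. -/
lemma card_matching_lt (N : ℕ) (A : Finset ℕ) (hA : ∀ x ∈ A, x < N ∧ x + 1 ∉ A)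
    (hirr : ¬ (Odd N ∧ ∀ y < N, Even y → y ∈ A)) : 2 * A.card < N + 1 := by
  have hinj : Set.InjOn (fun x => x / 2) (A : Set ℕ) := by
    intro x hx y hy hxy
    simp only at hxy
    by_contra hne
    have h1 := (hA x hx).2
    have h2 := (hA y hy).2
    rcases lt_or_gt_of_ne hne with h | h
    · exact h1 (by rw [show x + 1 = y by omega]; exact hy)
    · exact h2 (by rw [show y + 1 = x by omega]; exact hx)
  have himg : A.image (fun x => x / 2) ⊆ Finset.range ((N + 1) / 2) := by
    intro q hq
    obtain ⟨x, hx, rfl⟩ := Finset.mem_image.1 hq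
    have := (hA x hx).1
    simp only [Finset.mem_range]; omega
  have hcard : (A.image (fun x => x / 2)).card = A.card := Finset.card_image_of_injOn hinj
  have hle := Finset.card_le_card himg
  rw [hcard, Finset.card_range] at hle
  by_contra hcon
  have hfull : A.image (fun x => x / 2) = Finset.range ((N + 1) / 2) :=
    Finset.eq_of_subset_of_card_le himg (by rw [hcard, Finset.card_range]; omega)
  have hodd : Odd N := by
    rw [Nat.odd_iff]; omega
  have hmem : ∀ q < (N + 1) / 2, 2 * q ∈ A ∨ 2 * q + 1 ∈ A := by
    intro q hq
    have : q ∈ A.image (fun x => x / 2) := by rw [hfull]; simpa using hq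
    obtain ⟨x, hx, hxq⟩ := Finset.mem_image.1 this
    have : x = 2 * q ∨ x = 2 * q + 1 := by omega
    rcases this with rfl | rfl
    · exact Or.inl hx
    · exact Or.inr hx
  have hN : N % 2 = 1 := Nat.odd_iff.1 hodd
  have hdown : ∀ t, 2 * t + 1 ≤ N → N - 1 - 2 * t ∈ A := by
    intro t
    induction t with
    | zero =>
      intro ht
      rcases hmem ((N - 1) / 2) (by omega) with h | h
      · rwa [show N - 1 - 2 * 0 = 2 * ((N - 1) / 2) by omega]
      · have := (hA _ h).1; omega
    | succ t ih =>
      intro ht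
      have h1 := ih (by omega)
      rcases hmem ((N - 1 - 2 * (t + 1)) / 2) (by omega) with h | h
      · rwa [show N - 1 - 2 * (t + 1) = 2 * ((N - 1 - 2 * (t + 1)) / 2) by omega]
      · exact absurd h1 (by
          rw [show N - 1 - 2 * t = 2 * ((N - 1 - 2 * (t + 1)) / 2) + 1 + 1 by omega]
          exact (hA _ h).2)
  refine hirr ⟨hodd, fun y hy hye => ?_⟩
  have hy2 : y % 2 = 0 := Nat.even_iff.1 hye
  have := hdown ((N - 1 - y) / 2) (by omega)
  rwa [show N - 1 - 2 * ((N - 1 - y) / 2) = y by omega] at this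

/-- The number of blocks `{2q, 2q + 1}`, `q < t`, on which `f` vanishes. -/
def emptyBlocks (f : ℕ → ℕ) (t : ℕ) : ℕ :=
  ∑ q ∈ Finset.range t, (1 - f (2 * q)) * (1 - f (2 * q + 1))

lemma le_emptyBlocks_add (f : ℕ → ℕ) (hf : ∀ x, f x ≤ 1) (t : ℕ) :
    t ≤ emptyBlocks f t + ∑ x ∈ Finset.range (2 * t), f x := by
  induction t with
  | zero => simp
  | succ t ih =>
    have h1 : emptyBlocks f (t + 1) = emptyBlocks f t +
      (1 - f (2 * t)) * (1 - f (2 * t + 1)) := Finset.sum_range_succ _ _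
    rw [h1, show 2 * (t + 1) = 2 * t + 1 + 1 by ring, Finset.sum_range_succ,
      Finset.sum_range_succ]
    have ha := hf (2 * t)
    have hb := hf (2 * t + 1)
    generalize f (2 * t) = p at *
    generalize f (2 * t + 1) = q at *
    interval_cases p <;> interval_cases q <;> simp <;> omega

/-- A cut point `2t` outside the support of `f` with exactly `k` empty blocks before it. -/
lemma exists_cut (N k : ℕ) (f : ℕ → ℕ) (hf : ∀ x, f x ≤ 1)
    (hk : 2 * (∑ x ∈ Finset.range (N + 1), f x + k) < N + 1) :
    ∃ t, 2 * t ≤ N ∧ f (2 * t) = 0 ∧ emptyBlocks f t = k := by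
  classical
  set t := Nat.findGreatest (fun t => emptyBlocks f t ≤ k) (N / 2) with ht
  have htle : t ≤ N / 2 := Nat.findGreatest_le _
  have hgt : emptyBlocks f t ≤ k :=
    Nat.findGreatest_spec (P := fun t => emptyBlocks f t ≤ k) (Nat.zero_le (N / 2))
      (by simp [emptyBlocks])
  refine ⟨t, by omega, ?_⟩
  rcases Nat.lt_or_ge t (N / 2) with hlt | hge
  · have h1 : ¬ emptyBlocks f (t + 1) ≤ k :=
      Nat.findGreatest_is_greatest (P := fun t => emptyBlocks f t ≤ k) (Nat.lt_succ_self t) hlt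
    have h2 : emptyBlocks f (t + 1) = emptyBlocks f t +
      (1 - f (2 * t)) * (1 - f (2 * t + 1)) := Finset.sum_range_succ _ _
    have ha := hf (2 * t)
    have hb := hf (2 * t + 1)
    generalize f (2 * t) = p at *
    generalize f (2 * t + 1) = q at *
    interval_cases p <;> interval_cases q <;> simp at h2 ⊢ <;> omega
  · have h1 := le_emptyBlocks_add f hf t
    have h2 : ∑ x ∈ Finset.range (2 * t + 1), f x ≤ ∑ x ∈ Finset.range (N + 1), f x :=
      Finset.sum_le_sum_of_subset (by intro x; simp; omega)
    rw [Finset.sum_range_succ] at h2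
    omega

/-- Edge multiplicities obtained from the cut `2t`: the even edges before it, doubled when both
ends lie in the support of `f`, and after it the edge `{x, x + 1}` for each `x + 1` in the
support. -/
def cutMult (N t : ℕ) (f : ℕ → ℕ) (x : ℕ) : ℕ :=
  if x < 2 * t then (if x % 2 = 0 then 1 + f x * f (x + 1) else 0)
  else if x < N then f (x + 1) else 0

lemma sum_cutMult (N t : ℕ) (f : ℕ → ℕ) (hf : ∀ x, f x ≤ 1) (ht : 2 * t ≤ N)
    (hft : f (2 * t) = 0) :
    ∑ x ∈ Finset.range (N + 1), cutMult N t f x =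
      ∑ x ∈ Finset.range (N + 1), f x + emptyBlocks f t := by
  have h1 : ∀ r ≤ t, ∑ x ∈ Finset.range (2 * r), cutMult N t f x =
      ∑ x ∈ Finset.range (2 * r), f x + emptyBlocks f r := by
    intro r
    induction r with
    | zero => intro _; simp [emptyBlocks]
    | succ r ih =>
      intro hr
      have h2 : emptyBlocks f (r + 1) = emptyBlocks f r +
        (1 - f (2 * r)) * (1 - f (2 * r + 1)) := Finset.sum_range_succ _ _
      rw [show 2 * (r + 1) = 2 * r + 1 + 1 by ring, Finset.sum_range_succ, Finset.sum_range_succ,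
        Finset.sum_range_succ, Finset.sum_range_succ, ih (by omega), h2]
      have e1 : cutMult N t f (2 * r) = 1 + f (2 * r) * f (2 * r + 1) := by
        simp only [cutMult]; rw [if_pos (by omega), if_pos (by omega)]
      have e2 : cutMult N t f (2 * r + 1) = 0 := by
        simp only [cutMult]; rw [if_pos (by omega), if_neg (by omega)]
      rw [e1, e2]
      have ha := hf (2 * r)
      have hb := hf (2 * r + 1)
      generalize f (2 * r) = p at *
      generalize f (2 * r + 1) = q at *
      interval_cases p <;> interval_cases q <;> simp <;> omega
  have h2 : ∀ r, 2 * t + r ≤ N → ∑ x ∈ Finset.range (2 * t + r), cutMult N t f x =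
      ∑ x ∈ Finset.range (2 * t + r + 1), f x + emptyBlocks f t := by
    intro r
    induction r with
    | zero => intro _; rw [add_zero, h1 t le_rfl, Finset.sum_range_succ, hft, add_zero]
    | succ r ih =>
      intro hr
      rw [← add_assoc, Finset.sum_range_succ, ih (by omega), Finset.sum_range_succ (n := _ + 1)]
      have e1 : cutMult N t f (2 * t + r) = f (2 * t + r + 1) := by
        simp only [cutMult]; rw [if_neg (by omega), if_pos (by omega)]
      rw [e1]; ring
  have h3 := h2 (N - 2 * t) (by omega)
  rw [show 2 * t + (N - 2 * t) = N by omega] at h3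
  rw [Finset.sum_range_succ (f := cutMult N t f), h3]
  have e1 : cutMult N t f N = 0 := by
    simp only [cutMult]; rw [if_neg (by omega), if_neg (by omega)]
  rw [e1, add_zero]

end Sequences

end

/-! ### Products of generators for a cycle -/

noncomputable section

section Cycle

variable {N : ℕ}

/-- Exponent vector of the generator of the complementary edge ideal at the edge `{j, j + 1}` of the
cycle on `Fin (N + 1)`. -/
def gexp (j : Fin (N + 1)) : Fin (N + 1) →₀ ℕ :=
  aexp (N + 1) - Finsupp.single j 1 - Finsupp.single (j + 1) 1

/-- Exponent vector of the product of generators with edge multiplicities `m`. -/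
def uexp (m : Fin (N + 1) → ℕ) : Fin (N + 1) →₀ ℕ := ∑ j, m j • gexp j

/-- The variables generating the colon ideal of the earlier products at the product with edge
multiplicities `m`.  Multiplication by `x_v` allows two ways of passing to an earlier product: moving
a copy of the edge `{v, v + 1}` to `{v + 1, v + 2}`, or, for odd `v`, replacing the even edges below
`v` by the odd ones together with the edge `{N, 0}`. -/
def colonSet (m : Fin (N + 1) → ℕ) : Finset (Fin (N + 1)) :=
  open Classical in
  Finset.univ.filter fun v => (v : ℕ) < N ∧
    (0 < m v ∨ (Odd (v : ℕ) ∧ ∀ x : Fin (N + 1), (x : ℕ) < v → Even (x : ℕ) → 0 < m x))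

/-- The edge multiplicities of the products of `s` generators.  They are ordered colexicographically,
and a larger index stands for an earlier position in the order of linear quotients. -/
def idx (N s : ℕ) : Finset (Colex (Fin (N + 1) → ℕ)) :=
  (Finset.piAntidiag Finset.univ s).map toColex.toEmbedding

lemma mem_idx {s : ℕ} {m : Colex (Fin (N + 1) → ℕ)} :
    m ∈ idx N s ↔ ∑ x, ofColex m x = s := by
  simp only [idx, Finset.mem_map, Finset.mem_piAntidiag]
  constructor
  · rintro ⟨f, ⟨hf, -⟩, rfl⟩; exact hf
  · intro h; exact ⟨ofColex m, ⟨h, fun _ _ => Finset.mem_univ _⟩, rfl⟩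

lemma exists_of_colex_lt {m m' : Colex (Fin (N + 1) → ℕ)} (h : m < m') :
    ∃ j : Fin (N + 1), (∀ x, j < x → ofColex m x = ofColex m' x) ∧ ofColex m j < ofColex m' j := by
  obtain ⟨j, h1, h2⟩ := h
  exact ⟨OrderDual.ofDual j, fun x hx => h1 x hx, h2⟩

lemma aexp_apply {n : ℕ} (v : Fin n) : aexp n v = 1 := by simp [aexp, expF_apply]

lemma gexp_apply (hN : 2 ≤ N) (j v : Fin (N + 1)) :
    gexp j v + (if v = j then 1 else 0) + (if v - 1 = j then 1 else 0) = 1 := by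
  have hne : j ≠ j + 1 := by
    intro h
    have : (1 : Fin (N + 1)) = 0 := by simpa using h.symm
    have := congrArg Fin.val this
    rw [Fin.val_one', Nat.mod_eq_of_lt (by omega)] at this
    simp at this
  simp only [gexp, Finsupp.tsub_apply, aexp_apply, Finsupp.single_apply, sub_eq_iff_eq_add]
  by_cases h1 : v = j
  · subst h1
    simp [hne, hne.symm]
  · by_cases h2 : v = j + 1
    · rw [if_neg (Ne.symm h1), if_pos h2.symm, if_neg h1, if_pos h2]; rfl
    · simp [h1, h2, Ne.symm h1, Ne.symm h2]

lemma uexp_apply (hN : 2 ≤ N) (m : Fin (N + 1) → ℕ) (v : Fin (N + 1)) :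
    uexp m v + m v + m (v - 1) = ∑ x, m x := by
  have h1 : uexp m v = ∑ j, m j * gexp j v := by
    simp [uexp, Finsupp.finsetSum_apply]
  have h2 : m v = ∑ j, m j * (if v = j then 1 else 0) := by simp
  have h3 : m (v - 1) = ∑ j, m j * (if v - 1 = j then 1 else 0) := by simp
  rw [h1, h2, h3, ← Finset.sum_add_distrib, ← Finset.sum_add_distrib]
  refine Finset.sum_congr rfl fun j _ => ?_
  rw [← mul_add, ← mul_add, gexp_apply hN, mul_one]

lemma sum_pred (m : Fin (N + 1) → ℕ) : ∑ v, m (v - 1) = ∑ v, m v :=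
  Equiv.sum_comp (Equiv.subRight (1 : Fin (N + 1))) m

lemma deg_uexp (hN : 2 ≤ N) (m : Fin (N + 1) → ℕ) :
    deg (uexp m) = (N - 1) * ∑ x, m x := by
  have h : ∑ v, (uexp m v + m v + m (v - 1)) = ∑ _v : Fin (N + 1), ∑ x, m x :=
    Finset.sum_congr rfl fun v _ => uexp_apply hN m v
  rw [Finset.sum_add_distrib, Finset.sum_add_distrib, sum_pred] at h
  simp only [Finset.sum_const, Finset.card_univ, Fintype.card_fin, smul_eq_mul] at h
  obtain ⟨k, rfl⟩ : ∃ k, N = k + 1 := ⟨N - 1, by omega⟩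
  simp only [deg, Nat.add_sub_cancel]
  nlinarith

lemma val_pred (v : Fin (N + 1)) :
    ((v - 1 : Fin (N + 1)) : ℕ) = if (v : ℕ) = 0 then N else (v : ℕ) - 1 := by
  rw [Fin.coe_sub_one]
  simp only [Fin.ext_iff, Fin.val_zero]

/-- Extension of a function on `Fin (N + 1)` to `ℕ` by zero. -/
def lift (m : Fin (N + 1) → ℕ) (x : ℕ) : ℕ := if h : x < N + 1 then m ⟨x, h⟩ else 0

lemma lift_val (m : Fin (N + 1) → ℕ) (v : Fin (N + 1)) : lift m v = m v := by
  unfold lift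
  rw [dif_pos v.2]

lemma lift_pred (m : Fin (N + 1) → ℕ) (v : Fin (N + 1)) :
    m (v - 1) = if (v : ℕ) = 0 then lift m N else lift m ((v : ℕ) - 1) := by
  rw [← lift_val m (v - 1), val_pred]
  split_ifs <;> rfl

lemma sum_lift (m : Fin (N + 1) → ℕ) : ∑ x ∈ Finset.range (N + 1), lift m x = ∑ v, m v := by
  rw [← Fin.sum_univ_eq_sum_range]
  exact Finset.sum_congr rfl fun v _ => lift_val m v

lemma uexp_le_of (hN : 2 ≤ N) {m m' : Fin (N + 1) → ℕ} (hs : ∑ x, m' x = ∑ x, m x)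
    (b : Fin (N + 1) →₀ ℕ) (h : ∀ x, m x + m (x - 1) ≤ m' x + m' (x - 1) + b x) :
    uexp m' ≤ uexp m + b := by
  intro x
  have h1 := uexp_apply hN m x
  have h2 := uexp_apply hN m' x
  have h3 := h x
  simp only [Finsupp.add_apply]
  omega

/-- Moving a copy of the edge `{v, v + 1}` to `{v + 1, v + 2}`. -/
lemma exists_shift (hN : 2 ≤ N) (m : Fin (N + 1) → ℕ) (v : Fin (N + 1)) (hv : (v : ℕ) < N)
    (hm : 0 < m v) :
    ∃ m' : Fin (N + 1) → ℕ, ∑ x, m' x = ∑ x, m x ∧ toColex m < toColex m' ∧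
      uexp m' ≤ uexp m + Finsupp.single v 1 := by
  have hval : ((v + 1 : Fin (N + 1)) : ℕ) = v + 1 := by
    rw [Fin.val_add_one_of_lt]
    exact Fin.lt_def.2 (by simpa using hv)
  have hne : v ≠ v + 1 := fun h => by
    have := congrArg Fin.val h
    omega
  set m' : Fin (N + 1) → ℕ := fun x => m x - (if x = v then 1 else 0) + (if x = v + 1 then 1 else 0)
    with hm'
  have hsum : ∑ x, m' x = ∑ x, m x := by
    have h1 : ∑ x, (m' x + (if x = v then 1 else 0)) = ∑ x, (m x + (if x = v + 1 then 1 else 0)) := by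
      refine Finset.sum_congr rfl fun x _ => ?_
      simp only [hm']
      by_cases hx : x = v
      · subst hx; simp [hne]; omega
      · simp [hx]
    simpa [Finset.sum_add_distrib] using h1
  refine ⟨m', hsum, ⟨v + 1, ?_, ?_⟩, ?_⟩
  · intro x hx
    have hx' : (v : ℕ) + 1 < x := by rw [← hval]; exact Fin.lt_def.1 hx
    have h1 : x ≠ v := fun h => by subst h; omega
    have h2 : x ≠ v + 1 := fun h => by rw [h, hval] at hx'; omega
    change m x = m' x
    simp [hm', h1, h2]
  · change m (v + 1) < m' (v + 1)
    simp [hm', hne.symm]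
  · refine uexp_le_of hN hsum _ fun x => ?_
    simp only [hm', Finsupp.single_apply, sub_eq_iff_eq_add]
    by_cases h1 : x = v
    · subst h1; simp [hne]; omega
    · by_cases h2 : x = v + 1
      · subst h2; simp [hne, hne.symm]; omega
      · simp [h1, h2, Ne.symm h1]

/-- Replacing the even edges below an odd `v` by the odd ones and the edge `{N, 0}` lowers the degree
of `v` by one and raises that of `N` by one. -/
lemma exists_alternate (hN : 2 ≤ N) (m : Fin (N + 1) → ℕ) (v : Fin (N + 1))
    (hodd : Odd (v : ℕ))
    (hm : ∀ x : Fin (N + 1), (x : ℕ) < v → Even (x : ℕ) → 0 < m x) :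
    ∃ m' : Fin (N + 1) → ℕ, ∑ x, m' x = ∑ x, m x ∧ toColex m < toColex m' ∧
      ∀ x, m' x + m' (x - 1) + (if x = v then 1 else 0) =
        m x + m (x - 1) + (if x = Fin.last N then 1 else 0) := by
  have hvlt := v.2
  have hv1 : (v : ℕ) % 2 = 1 := Nat.odd_iff.1 hodd
  set m' : Fin (N + 1) → ℕ := fun x =>
    m x - (if (x : ℕ) < v ∧ (x : ℕ) % 2 = 0 then 1 else 0) +
      (if (x : ℕ) < v ∧ (x : ℕ) % 2 = 1 then 1 else 0) + (if (x : ℕ) = N then 1 else 0) with hm'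
  have hid : ∀ x, m' x + m' (x - 1) + (if x = v then 1 else 0) =
        m x + m (x - 1) + (if x = Fin.last N then 1 else 0) := by
    intro x
    have hxlt := x.2
    have h1 := hm x
    have h2 := hm (x - 1)
    simp only [hm', Fin.ext_iff, Fin.val_last, Nat.even_iff, val_pred] at h1 h2 ⊢
    by_cases hx : (x : ℕ) = 0
    · simp only [hx, if_true] at h1 h2 ⊢
      have h3 := h1 (by omega) trivial
      have h4 : 0 < (v : ℕ) := by omega
      have h5 : ¬ N < (v : ℕ) := by omega
      have h6 : ¬ 0 = N := by omega
      have h7 : ¬ 0 = (v : ℕ) := by omega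
      simp only [h4, h5, h6, h7, true_and, false_and, if_true, if_false, Nat.zero_mod,
        zero_ne_one]
      omega
    · simp only [hx, if_false] at h1 h2 ⊢
      rcases lt_trichotomy (x : ℕ) v with h | h | h
      · rcases Nat.mod_two_eq_zero_or_one (x : ℕ) with hp | hp
        · have := h1 h hp
          rw [if_pos (by omega), if_neg (by omega), if_neg (by omega), if_neg (by omega),
            if_pos (by omega), if_neg (by omega), if_neg (by omega)]
          omega
        · have := h2 (by omega) (by omega)
          rw [if_neg (by omega), if_pos (by omega), if_neg (by omega), if_pos (by omega),
            if_neg (by omega), if_neg (by omega), if_neg (by omega)]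
          omega
      · have := h2 (by omega) (by omega)
        rw [if_neg (by omega), if_neg (by omega), if_pos (c := (x : ℕ) - 1 < v ∧ _) (by omega),
          if_neg (c := (x : ℕ) - 1 < v ∧ _) (by omega), if_neg (c := (x : ℕ) - 1 = N) (by omega),
          if_pos h]
        omega
      · rw [if_neg (by omega), if_neg (by omega), if_neg (c := (x : ℕ) - 1 < v ∧ _) (by omega),
          if_neg (c := (x : ℕ) - 1 < v ∧ _) (by omega), if_neg (c := (x : ℕ) - 1 = N) (by omega),
          if_neg (c := (x : ℕ) = v) (by omega)]
        omega
  have hsum : ∑ x, m' x = ∑ x, m x := by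
    have h1 := Finset.sum_congr (rfl : (Finset.univ : Finset (Fin (N + 1))) = _) fun x _ => hid x
    simp only [Finset.sum_add_distrib, sum_pred, Finset.sum_ite_eq', Finset.mem_univ, if_true] at h1
    omega
  refine ⟨m', hsum, ⟨Fin.last N, ?_, ?_⟩, hid⟩
  · intro x hx
    exact absurd (Fin.le_last x) (not_le.2 hx)
  · change m (Fin.last N) < m' (Fin.last N)
    simp only [hm', Fin.val_last]
    rw [if_neg (by omega), if_neg (by omega)]
    simp

/-- A product of generators whose even edges are all present is redundant when the cycle has even
length. -/
lemma not_all_even_of_irredundant (hN : 2 ≤ N) {s : ℕ} {m : Colex (Fin (N + 1) → ℕ)}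
    (hm : m ∈ idx N s) (hirr : ¬ Redundant (idx N s) (fun l => uexp (ofColex l)) m) :
    ¬ (Odd N ∧ ∀ y < N, Even y → 0 < lift (ofColex m) y) := by
  rintro ⟨hodd, hall⟩
  obtain ⟨m', hsum, hlt, hid⟩ := exists_alternate hN (ofColex m) (Fin.last N) (by simpa using hodd)
    (fun x hx hxe => by rw [← lift_val (ofColex m) x]; exact hall x (by simpa using hx) hxe)
  refine hirr ⟨toColex m', mem_idx.2 (by rw [← mem_idx.1 hm]; exact hsum), hlt, ?_⟩
  have := uexp_le_of hN hsum 0 (fun x => by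
    have := hid x
    simp only [Finsupp.coe_zero, Pi.zero_apply]
    omega)
  simpa using this

lemma mem_colonSet {m : Fin (N + 1) → ℕ} {v : Fin (N + 1)} :
    v ∈ colonSet m ↔ (v : ℕ) < N ∧ (0 < lift m v ∨
      (Odd (v : ℕ) ∧ ∀ y < (v : ℕ), Even y → 0 < lift m y)) := by
  simp only [colonSet, Finset.mem_filter, Finset.mem_univ, true_and, lift_val]
  refine and_congr_right fun hv => or_congr_right (and_congr_right fun _ => ?_)
  constructor
  · intro h y hy hye
    have := h ⟨y, by omega⟩ hy hye
    rwa [← lift_val m] at this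
  · intro h x hx hxe
    rw [← lift_val m x]; exact h x hx hxe

/-- The products of `s` generators have linear quotients. -/
theorem linQuot_cycle (hN : 2 ≤ N) (s : ℕ) :
    LinQuot (idx N s) (fun l => uexp (ofColex l)) (fun l => colonSet (ofColex l)) := by
  intro m hm hirr
  have hms := mem_idx.1 hm
  refine ⟨fun v hv => ?_, fun m' hm' hlt => ?_⟩
  · rw [mem_colonSet] at hv
    obtain ⟨hvN, hpos | ⟨hodd, hev⟩⟩ := hv
    · rw [lift_val] at hpos
      obtain ⟨m', hs, hlt, hle⟩ := exists_shift hN (ofColex m) v hvN hpos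
      exact ⟨toColex m', mem_idx.2 (by rw [← hms]; exact hs), hlt, hle⟩
    · obtain ⟨m', hs, hlt, hid⟩ := exists_alternate hN (ofColex m) v hodd
        (fun x hx hxe => by rw [← lift_val (ofColex m) x]; exact hev x hx hxe)
      refine ⟨toColex m', mem_idx.2 (by rw [← hms]; exact hs), hlt, ?_⟩
      refine uexp_le_of hN hs _ fun x => ?_
      have := hid x
      simp only [Finsupp.single_apply, eq_comm (a := v)]
      omega
  · have hms' := mem_idx.1 hm'
    by_contra hcon
    push Not at hcon
    obtain ⟨j₀, htop', hj₀'⟩ := exists_of_colex_lt hlt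
    have hvert : ∀ v ∈ colonSet (ofColex m), ofColex m v + ofColex m (v - 1) ≤
        ofColex m' v + ofColex m' (v - 1) := by
      intro v hv
      have h1 := hcon v hv
      have h2 := uexp_apply hN (ofColex m) v
      have h3 := uexp_apply hN (ofColex m') v
      omega
    refine no_nonneg_increment N (lift (ofColex m))
      (fun x => (lift (ofColex m') x : ℤ) - lift (ofColex m) x) j₀ (by omega) ?_ ?_ ?_ ?_ ?_ ?_
      (not_all_even_of_irredundant hN hm hirr)
    · rw [Finset.sum_sub_distrib, ← Nat.cast_sum, ← Nat.cast_sum, sum_lift, sum_lift, hms, hms',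
        sub_self]
    · intro x _ hx; omega
    · simp only [lift_val]; omega
    · intro x hx hxN
      have h1 := htop' ⟨x, by omega⟩ (Fin.lt_def.2 hx)
      simp only [lift, show x < N + 1 by omega, dif_pos, h1, sub_self]
    · intro _ h0
      have h1 := hvert 0 (mem_colonSet.2 ⟨by simp; omega, Or.inl h0⟩)
      rw [lift_pred (ofColex m), lift_pred (ofColex m'), ← lift_val (ofColex m),
        ← lift_val (ofColex m')] at h1
      simp only [Fin.val_zero, if_true] at h1
      omega
    · intro x hx hor
      have h1 := hvert ⟨x + 1, by omega⟩ (mem_colonSet.2 ⟨hx, hor⟩)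
      rw [lift_pred (ofColex m), lift_pred (ofColex m'), ← lift_val (ofColex m),
        ← lift_val (ofColex m')] at h1
      simp only [Nat.add_sub_cancel, Nat.add_one_ne_zero, if_false] at h1
      omega

open Fin.NatCast Fin.CommRing in
/-- A multiset of fewer than `(N + 1) / 2` edges leaves a vertex uncovered, so its edges are
determined by its vertex degrees. -/
lemma irredundant_of_lt (hN : 2 ≤ N) {s : ℕ} (hs : 2 * s < N + 1) {m : Colex (Fin (N + 1) → ℕ)}
    (hm : m ∈ idx N s) : ¬ Redundant (idx N s) (fun l => uexp (ofColex l)) m := by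
  rintro ⟨m', hm', hlt, hle⟩
  have hms := mem_idx.1 hm
  have hms' := mem_idx.1 hm'
  have hle' : ∀ v, ofColex m v + ofColex m (v - 1) ≤ ofColex m' v + ofColex m' (v - 1) := by
    intro v
    have h1 := hle v
    have h2 := uexp_apply hN (ofColex m) v
    have h3 := uexp_apply hN (ofColex m') v
    simp only at h1
    omega
  have heq : ∀ v, ofColex m v + ofColex m (v - 1) = ofColex m' v + ofColex m' (v - 1) := by
    have h1 := (Finset.sum_eq_sum_iff_of_le (s := Finset.univ) (fun v _ => hle' v)).1 (by
      rw [Finset.sum_add_distrib, Finset.sum_add_distrib, sum_pred, sum_pred, hms, hms'])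
    exact fun v => h1 v (Finset.mem_univ v)
  obtain ⟨j₀, -, hj₀'⟩ := exists_of_colex_lt hlt
  -- The difference alternates in sign along the cycle, so it vanishes nowhere.
  have hstep : ∀ v, ofColex m v ≠ ofColex m' v → ofColex m (v + 1) ≠ ofColex m' (v + 1) := by
    intro v hv h
    have := heq (v + 1)
    rw [add_sub_cancel_right] at this
    omega
  have hne : ∀ k : ℕ, ofColex m (j₀ + (k : Fin (N + 1))) ≠ ofColex m' (j₀ + (k : Fin (N + 1))) := by
    intro k
    induction k with
    | zero => simpa using hj₀'.ne
    | succ k ih => rw [Nat.cast_succ, ← add_assoc]; exact hstep _ ih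
  have hall : ∀ v, 1 ≤ ofColex m v + ofColex m (v - 1) := by
    intro v
    have h1 := hne (v - j₀ : Fin (N + 1))
    rw [Fin.cast_val_eq_self, add_sub_cancel] at h1
    have := heq v
    omega
  have h2 : ∑ _v : Fin (N + 1), 1 ≤ ∑ v, (ofColex m v + ofColex m (v - 1)) :=
    Finset.sum_le_sum fun v _ => hall v
  rw [Finset.sum_add_distrib, sum_pred, hms] at h2
  simp at h2
  omega

/-- For `P ⊆ colonSet m`, a matching `M` contained in `m` covers `P`; the other vertices it covers
form `F`. -/
lemma exists_split (m : Fin (N + 1) → ℕ)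
    (hirr : ¬ (Odd N ∧ ∀ y < N, Even y → 0 < lift m y))
    (P : Finset (Fin (N + 1))) (hP : P ⊆ colonSet m) :
    ∃ (M : Fin (N + 1) → ℕ) (F : Finset (Fin (N + 1))), (∀ v, M v ≤ m v) ∧
      (∀ v, M v + M (v - 1) = (if v ∈ P then 1 else 0) + (if v ∈ F then 1 else 0)) ∧
      2 * ∑ v, M v < N + 1 ∧ ∑ v, M v ≤ P.card := by
  classical
  set P' : Finset ℕ := P.map Fin.valEmbedding with hP'
  have hmemP : ∀ v : Fin (N + 1), (v : ℕ) ∈ P' ↔ v ∈ P := by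
    intro v
    simp only [hP', Finset.mem_map, Fin.valEmbedding_apply]
    exact ⟨fun ⟨w, hw, h⟩ => Fin.ext h ▸ hw, fun h => ⟨v, h, rfl⟩⟩
  obtain ⟨A, hA, hcov⟩ := exists_matching N (lift m) P' (by
    intro x hx
    obtain ⟨v, hv, rfl⟩ := Finset.mem_map.1 hx
    exact mem_colonSet.1 (hP hv)) N
  set M : Fin (N + 1) → ℕ := fun v => if (v : ℕ) ∈ A then 1 else 0 with hM
  have hNA : N ∉ A := fun h => by have := (hA N h).1; omega
  have hMp : ∀ v : Fin (N + 1), M (v - 1) = if 0 < (v : ℕ) ∧ (v : ℕ) - 1 ∈ A then 1 else 0 := by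
    intro v
    simp only [hM, val_pred]
    by_cases hv : (v : ℕ) = 0
    · simp [hv, hNA]
    · simp [hv, Nat.pos_of_ne_zero hv]
  have hexcl : ∀ v : Fin (N + 1), (v : ℕ) ∈ A → ¬ (0 < (v : ℕ) ∧ (v : ℕ) - 1 ∈ A) := by
    rintro v hv ⟨h1, h2⟩
    have := (hA _ h2).2.2.1
    rw [Nat.sub_add_cancel h1] at this
    exact this hv
  have hsum : ∑ v, M v = A.card := by
    rw [hM, Fin.sum_univ_eq_sum_range (fun x => if x ∈ A then 1 else 0)]
    rw [Finset.sum_ite_mem, Finset.inter_eq_right.2]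
    · simp
    · intro x hx; have := (hA x hx).1; simp; omega
  refine ⟨M, Finset.univ.filter fun v => v ∉ P ∧ (((v : ℕ) ∈ A) ∨ (0 < (v : ℕ) ∧ (v : ℕ) - 1 ∈ A)),
    fun v => ?_, fun v => ?_, ?_, ?_⟩
  · simp only [hM]
    split_ifs with h
    · have := (hA _ h).2.1
      rw [lift_val] at this
      exact this
    · exact Nat.zero_le _
  · rw [hMp]
    simp only [hM, Finset.mem_filter, Finset.mem_univ, true_and]
    by_cases hv : v ∈ P
    · have hvN : (v : ℕ) < N := (mem_colonSet.1 (hP hv)).1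
      rcases hcov v ((hmemP v).2 hv) hvN with h | h
      · simp only [h, hexcl v h, hv]; simp
      · have h' : (v : ℕ) ∉ A := fun h' => hexcl v h' h
        simp only [h, h', hv]; simp
    · by_cases h1 : (v : ℕ) ∈ A
      · simp only [h1, hexcl v h1, hv]; simp
      · simp only [h1, hv]; simp
  · rw [hsum]
    refine card_matching_lt N A (fun x hx => ⟨(hA x hx).1, (hA x hx).2.2.1⟩) ?_
    rintro ⟨h1, h2⟩
    exact hirr ⟨h1, fun y hy hye => (hA y (h2 y hy hye)).2.1⟩
  · rw [hsum, ← Finset.card_map (s := P) Fin.valEmbedding]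
    refine Finset.card_le_card_of_injOn (fun x => if x ∈ P' then x else x + 1) ?_ ?_
    · intro x hx
      simp only
      split_ifs with h
      · exact h
      · exact (hA x hx).2.2.2.resolve_left h
    · intro x hx y hy hxy
      have h1 := (hA x hx).2.2.1
      have h2 := (hA y hy).2.2.1
      simp only at hxy
      split_ifs at hxy
      · exact hxy
      · exact absurd (hxy ▸ hx) h2
      · exact absurd (hxy.symm ▸ hy) h1
      · omega

/-- Conversely, every vertex set `F` that is small enough arises from a multiset `M` of `|F| + k`
edges and a subset `P` of its colon set. -/
lemma exists_data (F : Finset (Fin (N + 1))) (k : ℕ) (hk : 2 * (F.card + k) < N + 1) :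
    ∃ (M : Fin (N + 1) → ℕ) (P : Finset (Fin (N + 1))),
      (∀ v, M v + M (v - 1) = (if v ∈ P then 1 else 0) + (if v ∈ F then 1 else 0)) ∧
      ∑ v, M v = F.card + k ∧ P ⊆ colonSet M := by
  classical
  set g : Fin (N + 1) → ℕ := fun v => if v ∈ F then 1 else 0 with hg
  set f := lift g with hf
  have hf1 : ∀ x, f x ≤ 1 := by
    intro x
    simp only [hf, lift, hg]
    split_ifs <;> omega
  have hfsum : ∑ x ∈ Finset.range (N + 1), f x = F.card := by
    rw [hf, sum_lift]; simp [hg]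
  obtain ⟨t, htN, hft, hte⟩ := exists_cut N k f hf1 (by rw [hfsum]; exact hk)
  set M : Fin (N + 1) → ℕ := fun v => cutMult N t f v with hM
  have hlift : ∀ x ≤ N, lift M x = cutMult N t f x := by
    intro x hx
    simp [lift, hM, show x < N + 1 by omega]
  have hMp : ∀ v : Fin (N + 1), M (v - 1) =
      if (v : ℕ) = 0 then 0 else cutMult N t f ((v : ℕ) - 1) := by
    intro v
    simp only [hM, val_pred]
    split_ifs
    · simp only [cutMult]; rw [if_neg (by omega), if_neg (by omega)]
    · rfl
  have hbound : ∀ v : Fin (N + 1), f v ≤ M v + M (v - 1) ∧ M v + M (v - 1) ≤ f v + 1 ∧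
      (f v < M v + M (v - 1) → v ∈ colonSet M) := by
    intro v
    have hvlt := v.2
    rw [mem_colonSet, hMp, hlift v (by omega)]
    simp only [hM]
    generalize (v : ℕ) = x at *
    rcases Nat.lt_or_ge x (2 * t) with hx | hx
    · have hev : ∀ y < 2 * t, Even y → 0 < cutMult N t f y := by
        intro y hy hye
        simp only [cutMult]
        rw [if_pos hy, if_pos (Nat.even_iff.1 hye)]
        omega
      rcases Nat.mod_two_eq_zero_or_one x with hp | hp
      · have e1 : cutMult N t f x = 1 + f x * f (x + 1) := by
          simp only [cutMult]; rw [if_pos hx, if_pos hp]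
        have e2 : (if x = 0 then 0 else cutMult N t f (x - 1)) = 0 := by
          split_ifs
          · rfl
          · simp only [cutMult]; rw [if_pos (by omega), if_neg (by omega)]
        rw [e1, e2]
        have ha := hf1 x
        have hb := hf1 (x + 1)
        refine ⟨by omega, ?_, fun _ => ⟨by omega, Or.inl (by omega)⟩⟩
        generalize f x = p at *
        generalize f (x + 1) = q at *
        interval_cases p <;> interval_cases q <;> simp
      · have e1 : cutMult N t f x = 0 := by
          simp only [cutMult]; rw [if_pos hx, if_neg (by omega)]
        have e2 : (if x = 0 then 0 else cutMult N t f (x - 1)) = 1 + f (x - 1) * f x := by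
          rw [if_neg (by omega)]
          simp only [cutMult]
          rw [if_pos (by omega), if_pos (by omega), Nat.sub_add_cancel (by omega)]
        rw [e1, e2]
        have ha := hf1 x
        have hb := hf1 (x - 1)
        refine ⟨by omega, ?_, fun _ => ⟨by omega, Or.inr ⟨Nat.odd_iff.2 hp, fun y hy hye =>
          (hlift y (by omega)).symm ▸ hev y (by omega) hye⟩⟩⟩
        generalize f x = p at *
        generalize f (x - 1) = q at *
        interval_cases p <;> interval_cases q <;> simp
    · have e1 : cutMult N t f x = if x < N then f (x + 1) else 0 := by
        simp only [cutMult]; rw [if_neg (by omega)]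
      have e2 : (if x = 0 then 0 else cutMult N t f (x - 1)) = f x := by
        rcases Nat.eq_or_lt_of_le hx with hx' | hx'
        · rw [← hx', hft]
          split_ifs
          · rfl
          · simp only [cutMult]; rw [if_pos (by omega), if_neg (by omega)]
        · rw [if_neg (by omega)]
          simp only [cutMult]
          rw [if_neg (by omega), if_pos (by omega), Nat.sub_add_cancel (by omega)]
      rw [e1, e2]
      have hb := hf1 (x + 1)
      split_ifs with hxN
      · refine ⟨by omega, by omega, fun h => ⟨hxN, Or.inl (by omega)⟩⟩
      · refine ⟨by omega, by omega, fun h => absurd h (by omega)⟩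
  refine ⟨M, Finset.univ.filter fun v => f v < M v + M (v - 1), fun v => ?_, ?_, fun v hv => ?_⟩
  · obtain ⟨h1, h2, -⟩ := hbound v
    have h3 : f v = if v ∈ F then 1 else 0 := by rw [hf, lift_val]
    rw [← h3]
    simp only [Finset.mem_filter, Finset.mem_univ, true_and]
    split_ifs <;> omega
  · rw [hM, Fin.sum_univ_eq_sum_range (cutMult N t f), sum_cutMult N t f hf1 htN hft, hfsum, hte]
  · exact (hbound v).2.2 (Finset.mem_filter.1 hv).2

end Cycle

end

/-! ### Multidegrees of the homology of powers -/

noncomputable section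

variable {K : Type} [Field K] {N : ℕ}

lemma compIdeal_cycle (G : SimpleGraph (Fin (N + 1)))
    (hadj : ∀ i j : Fin (N + 1), G.Adj i j ↔
      ((j : ℕ) = ((i : ℕ) + 1) % (N + 1) ∨ (i : ℕ) = ((j : ℕ) + 1) % (N + 1))) :
    compIdeal K (N + 1) G =
      Ideal.span (Set.range fun j : Fin (N + 1) => (monomial (gexp j) 1 : S K (N + 1))) := by
  have hval : ∀ i : Fin (N + 1), ((i + 1 : Fin (N + 1)) : ℕ) = ((i : ℕ) + 1) % (N + 1) := by
    intro i
    rw [Fin.val_add, Fin.val_one', Nat.add_mod_mod]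
  unfold compIdeal
  congr 1
  ext p
  constructor
  · rintro ⟨i, j, hij, rfl⟩
    rcases (hadj i j).1 hij with h | h
    · obtain rfl : j = i + 1 := Fin.ext (by rw [h, hval])
      exact ⟨i, rfl⟩
    · obtain rfl : i = j + 1 := Fin.ext (by rw [h, hval])
      refine ⟨j, ?_⟩
      simp only [gexp]
      rw [tsub_right_comm]
  · rintro ⟨j, rfl⟩
    exact ⟨j, j + 1, (hadj _ _).2 (Or.inl (hval j)), rfl⟩

lemma uexp_add (m m' : Fin (N + 1) → ℕ) : uexp (m + m') = uexp m + uexp m' := by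
  simp [uexp, add_smul, Finset.sum_add_distrib]

lemma uexp_single (j : Fin (N + 1)) : uexp (Pi.single j 1) = gexp j := by
  simp [uexp, Pi.single_apply]

variable (K N) in
/-- The complementary edge ideal of the cycle on `Fin (N + 1)`. -/
def cycIdeal : Ideal (S K (N + 1)) :=
  Ideal.span (Set.range fun j : Fin (N + 1) => (monomial (gexp j) 1 : S K (N + 1)))

lemma cycIdeal_pow (s : ℕ) :
    cycIdeal K N ^ s = Ideal.span ((fun b => (monomial b 1 : S K (N + 1))) ''
      {b | ∃ m : Fin (N + 1) → ℕ, ∑ v, m v = s ∧ uexp m = b}) := by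
  induction s with
  | zero =>
    rw [pow_zero, Ideal.one_eq_top, eq_comm, Ideal.eq_top_iff_one]
    exact Ideal.subset_span ⟨0, ⟨0, by simp, by simp [uexp]⟩, rfl⟩
  | succ s ih =>
    rw [pow_succ, ih, cycIdeal, Ideal.span_mul_span']
    congr 1
    ext p
    simp only [Set.mem_mul, Set.mem_image, Set.mem_range, Set.mem_ofPred_eq]
    constructor
    · rintro ⟨_, ⟨_, ⟨m, hm, rfl⟩, rfl⟩, _, ⟨j, rfl⟩, rfl⟩
      refine ⟨_, ⟨m + Pi.single j 1, ?_, rfl⟩, ?_⟩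
      · simp [Finset.sum_add_distrib, hm]
      · rw [uexp_add, uexp_single, monomial_mul, mul_one]
    · rintro ⟨_, ⟨m, hm, rfl⟩, rfl⟩
      obtain ⟨j, -, hj⟩ := Finset.exists_ne_zero_of_sum_ne_zero
        (show ∑ v, m v ≠ 0 by omega)
      have hmj : m = (m - Pi.single j 1) + Pi.single j 1 := by
        ext x
        by_cases hx : x = j
        · subst hx; simp; omega
        · simp [hx]
      refine ⟨_, ⟨_, ⟨m - Pi.single j 1, ?_, rfl⟩, rfl⟩, _, ⟨j, rfl⟩, ?_⟩
      · rw [hmj] at hm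
        simp only [Pi.add_apply, Finset.sum_add_distrib, Finset.sum_pi_single', Finset.mem_univ,
          if_true] at hm
        omega
      · rw [monomial_mul, mul_one, ← uexp_single, ← uexp_add, ← hmj]

lemma monomial_mem_cycIdeal_pow {s : ℕ} {b : Fin (N + 1) →₀ ℕ} :
    (monomial b 1 : S K (N + 1)) ∈ cycIdeal K N ^ s ↔
      ∃ m : Fin (N + 1) → ℕ, ∑ v, m v = s ∧ uexp m ≤ b := by
  classical
  rw [cycIdeal_pow, mem_ideal_span_monomial_image, support_monomial, if_neg one_ne_zero]
  simp

/-- The condition on faces of the Koszul strand of `I ^ s`, in terms of products of generators. -/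
lemma face_iff {s : ℕ} {a : Fin (N + 1) →₀ ℕ} {F : Finset (Fin (N + 1))} :
    (expF F ≤ a ∧ (monomial (a - expF F) (1 : K) : S K (N + 1)) ∈ cycIdeal K N ^ s) ↔
      ∃ l ∈ idx N s, uexp (ofColex l) + expF F ≤ a := by
  rw [monomial_mem_cycIdeal_pow]
  constructor
  · rintro ⟨h, m, hm, hle⟩
    exact ⟨toColex m, mem_idx.2 hm, (le_tsub_iff_right h).1 hle⟩
  · rintro ⟨l, hl, hle⟩
    have h : expF F ≤ a := le_trans le_add_self hle
    exact ⟨h, ofColex l, mem_idx.1 hl, (le_tsub_iff_right h).2 hle⟩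

/-- If the edge multiset `M` has vertex degrees `P + F`, then `x_P` times the product of its
generators is `α ^ |M| / x_F`. -/
lemma uexp_add_expF (hN : 2 ≤ N) {M : Fin (N + 1) → ℕ} {P F : Finset (Fin (N + 1))}
    (h : ∀ v, M v + M (v - 1) = (if v ∈ P then 1 else 0) + (if v ∈ F then 1 else 0)) :
    uexp M + expF P = (∑ v, M v) • aexp (N + 1) - expF F := by
  ext v
  have h1 := uexp_apply hN M v
  have h2 := h v
  simp only [Finsupp.add_apply, Finsupp.tsub_apply, Finsupp.smul_apply, aexp_apply, expF_apply,
    smul_eq_mul, mul_one]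
  omega

lemma two_mul_sum_eq {M : Fin (N + 1) → ℕ} {P F : Finset (Fin (N + 1))}
    (h : ∀ v, M v + M (v - 1) = (if v ∈ P then 1 else 0) + (if v ∈ F then 1 else 0)) :
    2 * ∑ v, M v = P.card + F.card := by
  have h1 := Finset.sum_congr (rfl : (Finset.univ : Finset (Fin (N + 1))) = _) fun v _ => h v
  simp only [Finset.sum_add_distrib, sum_pred, Finset.sum_boole, Finset.filter_univ_mem,
    Nat.cast_id] at h1
  omega

/-- Every multidegree of `Tor_{i+1}` of `I ^ s` has the form `(α ^ r / x_F) · w` with `w` a product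
of `s - r` generators. -/
lemma exists_of_nontrivial (hN : 2 ≤ N) {s i : ℕ} {a : Fin (N + 1) →₀ ℕ}
    (h : Nontrivial (Hmod (cycIdeal K N ^ s) a (i + 1))) :
    ∃ (r : ℕ) (F : Finset (Fin (N + 1))) (mE : Fin (N + 1) → ℕ),
      2 * r = i + 1 + F.card ∧ 2 * r < N + 1 ∧ r ≤ i + 1 ∧ r + ∑ v, mE v = s ∧
      a = (r • aexp (N + 1) - expF F) + uexp mE := by
  obtain ⟨z, hz, hbd, hnb⟩ := (nontrivial_Hmod_iff _ _ _).1 h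
  have hex : ∃ j ∈ idx N s, ¬ Redundant (idx N s) (fun l => uexp (ofColex l)) j ∧
      ∃ P ⊆ colonSet (ofColex j), P.card = i + 1 ∧ uexp (ofColex j) + expF P = a := by
    by_contra hcon
    push Not at hcon
    obtain ⟨y, hy, hyz⟩ := exact_of_linQuot (linQuot_cycle hN s) a (i + 1)
      (fun j hj hr P hP hc => hcon j hj hr P hP hc) (idx N s) subset_rfl (fun _ _ l hl _ => hl) z
      (fun F hF => ⟨(hz F hF).1, face_iff.1 (hz F hF).2⟩) hbd
    exact hnb y (fun F hF => ⟨(hy F hF).1, face_iff.2 (hy F hF).2⟩) hyz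
  obtain ⟨j, hj, hirr, P, hP, hPc, rfl⟩ := hex
  obtain ⟨M, F, hMle, hid, hlt, hle⟩ := exists_split (ofColex j)
    (not_all_even_of_irredundant hN hj hirr) P hP
  have hj' : ofColex j = (ofColex j - M) + M := by
    ext v
    have := hMle v
    simp only [Pi.add_apply, Pi.sub_apply]
    omega
  refine ⟨∑ v, M v, F, ofColex j - M, ?_, hlt, hPc ▸ hle, ?_, ?_⟩
  · rw [two_mul_sum_eq hid, hPc]
  · rw [← mem_idx.1 hj, add_comm, ← Finset.sum_add_distrib]
    exact Finset.sum_congr rfl fun v _ => (congrFun hj' v).symm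
  · rw [← uexp_add_expF hN hid, add_comm _ (uexp (ofColex j - M)), ← add_assoc, ← uexp_add]
    exact hj' ▸ rfl

/-- A cycle for `I ^ r` stays one for `I ^ s` after multiplication by a product of `s - r`
generators, and it is not a boundary since linearity leaves no faces of larger cardinality. -/
lemma nontrivial_of_data (hN : 2 ≤ N) {i : ℕ} (M mE : Fin (N + 1) → ℕ)
    (hM : 2 * ∑ v, M v < N + 1) {P : Finset (Fin (N + 1))} (hP : P ⊆ colonSet M)
    (hPc : P.card = i + 1) :
    Nontrivial (Hmod (cycIdeal K N ^ (∑ v, M v + ∑ v, mE v))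
      (uexp M + expF P + uexp mE) (i + 1)) := by
  have hmem : toColex M ∈ idx N (∑ v, M v) := mem_idx.2 rfl
  obtain ⟨z, hz, hbd, hne⟩ := exists_cycle_of_linQuot (K := K) (linQuot_cycle hN (∑ v, M v))
    ((N - 1) * ∑ v, M v) (fun l hl => by rw [deg_uexp hN, mem_idx.1 hl]) hmem
    (irredundant_of_lt hN hM hmem) hP hPc
  refine (nontrivial_Hmod_iff _ _ _).2 ⟨z, fun F hF => ?_, hbd, fun y hy hyz => hne ?_⟩
  · obtain ⟨hc, l, hl, hle⟩ := hz F hF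
    refine ⟨hc, face_iff.2 ⟨toColex (ofColex l + mE), mem_idx.2 ?_, ?_⟩⟩
    · rw [← mem_idx.1 hl, ← Finset.sum_add_distrib]
      rfl
    · change uexp (ofColex l + mE) + expF F ≤ _
      rw [uexp_add, add_right_comm]
      exact add_le_add_left hle _
  · have hy0 : y = 0 := by
      funext F
      by_contra hF
      obtain ⟨hc, hF'⟩ := hy F hF
      obtain ⟨l, hl, hle⟩ := face_iff.1 hF'
      have hd : deg (uexp (ofColex l) + expF F) ≤ deg (uexp M + expF P + uexp mE) :=
        Finset.sum_le_sum fun v _ => hle v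
      rw [deg_add, deg_add, deg_add, deg_expF, deg_expF, deg_uexp hN, deg_uexp hN, deg_uexp hN,
        mem_idx.1 hl, hc, hPc, mul_add] at hd
      omega
    rw [← hyz, hy0]
    funext G
    simp [bd]

end

/-- For the cycle `G` of length `n` and `I = I_c(G)`,
`HS_i(I^s) = Σ_{k=max{i-⌈n/2⌉+1,0}}^{⌊i/2⌋} Σ_{F⊆[n], |F|=i-2k}
(α^{i-k}/x_F)·I^{s-i+k}` for `1 ≤ i < n`, `s ≥ ⌊i/2⌋`
(with `I^t = 0` for `t < 0`). -/
theorem hs_compIdeal_pow_cycle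
    (K : Type) [Field K] (n : ℕ) (hn : 3 ≤ n) (G : SimpleGraph (Fin n))
    (hadj : ∀ i j : Fin n, G.Adj i j ↔
      ((j : ℕ) = ((i : ℕ) + 1) % n ∨ (i : ℕ) = ((j : ℕ) + 1) % n)) :
    ∀ i s : ℕ, 1 ≤ i → i < n → i / 2 ≤ s →
      HSIdeal i (compIdeal K n G ^ s) =
        ∑ k ∈ Finset.Icc ((i + 1) - (n + 1) / 2) (i / 2),
          ∑ F ∈ Finset.univ.powersetCard (i - 2 * k),
            Ideal.span {(monomial ((i - k) • aexp n - expF F) 1 : S K n)} *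
              zpowI (compIdeal K n G) ((s : ℤ) - (i : ℤ) + (k : ℤ)) := by
  intro i s hi _ _
  obtain ⟨N, rfl⟩ : ∃ N, n = N + 1 := ⟨n - 1, by omega⟩
  obtain ⟨i, rfl⟩ : ∃ j, i = j + 1 := ⟨i - 1, by omega⟩
  have hN : 2 ≤ N := by omega
  have hI : compIdeal K (N + 1) G = cycIdeal K N := compIdeal_cycle G hadj
  rw [hI]
  apply le_antisymm
  · refine Ideal.span_le.2 ?_
    rintro _ ⟨a, ha, rfl⟩
    obtain ⟨r, F, mE, hF, hlt, hle, hs, rfl⟩ := exists_of_nontrivial hN ha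
    have hk : i + 1 - r ∈ Finset.Icc ((i + 1 + 1) - (N + 1 + 1) / 2) ((i + 1) / 2) :=
      Finset.mem_Icc.2 ⟨by omega, by omega⟩
    have hF' : F ∈ Finset.univ.powersetCard (i + 1 - 2 * (i + 1 - r)) :=
      Finset.mem_powersetCard.2 ⟨Finset.subset_univ _, by omega⟩
    rw [Ideal.sum_eq_sup]
    refine Finset.le_sup (f := fun k => ∑ F ∈ Finset.univ.powersetCard (i + 1 - 2 * k),
      Ideal.span {(monomial ((i + 1 - k) • aexp (N + 1) - expF F) 1 : S K (N + 1))} *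
        zpowI (cycIdeal K N) ((s : ℤ) - ((i + 1 : ℕ) : ℤ) + (k : ℤ))) hk ?_
    rw [Ideal.sum_eq_sup]
    refine Finset.le_sup (f := fun F =>
      Ideal.span {(monomial ((i + 1 - (i + 1 - r)) • aexp (N + 1) - expF F) 1 : S K (N + 1))} *
        zpowI (cycIdeal K N) ((s : ℤ) - ((i + 1 : ℕ) : ℤ) + ((i + 1 - r : ℕ) : ℤ))) hF' ?_
    have hz : (s : ℤ) - ((i + 1 : ℕ) : ℤ) + ((i + 1 - r : ℕ) : ℤ) = ((∑ v, mE v : ℕ) : ℤ) := by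
      rw [Nat.cast_sub hle]
      push_cast [← hs]
      ring
    have hr : i + 1 - (i + 1 - r) = r := by omega
    simp only [hz, hr, zpowI, Nat.cast_nonneg, if_true, Int.toNat_natCast]
    rw [← mul_one (1 : K), ← monomial_mul, mul_one]
    exact Ideal.mul_mem_mul (Ideal.mem_span_singleton_self _)
      (monomial_mem_cycIdeal_pow.2 ⟨mE, rfl, le_rfl⟩)
  · rw [Ideal.sum_eq_sup]
    refine Finset.sup_le fun k hk => ?_
    rw [Ideal.sum_eq_sup]
    refine Finset.sup_le fun F hF => ?_
    obtain ⟨hk1, hk2⟩ := Finset.mem_Icc.1 hk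
    have hFc := (Finset.mem_powersetCard.1 hF).2
    unfold zpowI
    split_ifs with ht
    · obtain ⟨M, P, hid, hsum, hP⟩ := exists_data F k (by omega)
      have hPc : P.card = i + 1 := by
        have := two_mul_sum_eq hid
        omega
      have hr : i + 1 - k = ∑ v, M v := by omega
      rw [cycIdeal_pow, Ideal.span_mul_span', Ideal.span_le]
      rintro _ ⟨_, rfl, _, ⟨_, ⟨mE, hmE, rfl⟩, rfl⟩, rfl⟩
      refine Ideal.subset_span ⟨uexp M + expF P + uexp mE, ?_, ?_⟩
      · have hs : s = ∑ v, M v + ∑ v, mE v := by omega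
        rw [hs]
        exact nontrivial_of_data hN M mE (by omega) hP hPc
      · simp only [uexp_add_expF hN hid, hr, monomial_mul, mul_one]
    · simp

end Paper
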